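/- arXiv:1803.09245 — 6 statements merged into one kernel-verified Lean document; each statement's English description precedes it below -/
import Mathlib

section
/- Let p be a prime, R a ℤ_(p)-algebra, and P an fs monoid with P^gp torsion free. Then every z ∈ W(R[P]) can be written uniquely as a convergent sum z = Σ_{m ≥ 0, x ∈ P} V^m([a_{x,m}·T^x]) with a_{x,m} ∈ R: there is a unique family (a_{x,m})_{m ∈ ℕ, x ∈ P} of elements of R such that for each m the set {x ∈ P : a_{x,m} ≠ 0} is finite and, for every M ∈ ℕ, the image of z in W_M(R[P]) equals the (finite) sum of the images of the terms V^m([a_{x,m}·T^x]) with m < M. -/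
open scoped BigOperators

/-!
Over any commutative ring `A`, a set-theoretic section `s` of the zeroth component `W(A) → A` lets
one write each `w ∈ W(A)` uniquely as `s(a) + V(w')`, with `a` the zeroth component of `w`.
Iterating gives a unique expansion `z = Σ_m V^m(s(f_m))` with `f_m ∈ A`, because `V^M W(A)` is the
kernel of `W(A) → W_M(A)`. For `A = R[P]` the assignment `f ↦ Σ_x [f_x T^x]` is such a section, and
`a_{x,m}` is the coefficient of `T^x` in `f_m`.
-/

section VerschiebungExpansion

open WittVector

variable {p : ℕ} [Fact p.Prime] {A : Type*} [CommRing A]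

theorem truncate_iterate_verschiebung_self (M : ℕ) (w : WittVector p A) :
    truncate M (verschiebung^[M] w) = 0 := by
  rw [← RingHom.mem_ker, mem_ker_truncate]
  exact fun _ hi => iterate_verschiebung_coeff_eq_zero w hi

/-- The quotient of `w` on division by `V` with remainder in the image of `s`: the `w'` such that
`w = s(a) + V(w')`. It has this property only if `s` is a section of the zeroth component, since
`shift` just drops that component of the difference. -/
noncomputable def verschiebungQuotient (s : A → WittVector p A) (w : WittVector p A) :
    WittVector p A :=
  (w - s (w.coeff 0)).shift 1

variable {s : A → WittVector p A} (hs : ∀ a, (s a).coeff 0 = a)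
include hs

theorem add_verschiebung_verschiebungQuotient (w : WittVector p A) :
    s (w.coeff 0) + verschiebung (verschiebungQuotient s w) = w := by
  have coeff_zero_sub : (w - s (w.coeff 0)).coeff 0 = 0 :=
    (map_sub constantCoeff w _).trans (sub_eq_zero.mpr (hs _).symm)
  have verschiebung_quotient :
      w - s (w.coeff 0) = verschiebung (verschiebungQuotient s w) :=
    eq_iterate_verschiebung (n := 1) (by simpa using coeff_zero_sub)
  rw [← verschiebung_quotient, add_sub_cancel]

theorem sum_add_iterate_verschiebung_verschiebungQuotient (z : WittVector p A) (M : ℕ) :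
    ∑ m ∈ Finset.range M, verschiebung^[m] (s (((verschiebungQuotient s)^[m] z).coeff 0)) +
      verschiebung^[M] ((verschiebungQuotient s)^[M] z) = z := by
  induction M with
  | zero => simp
  | succ M ih =>
    rw [Finset.sum_range_succ, add_assoc, Function.iterate_succ_apply,
      Function.iterate_succ_apply' (verschiebungQuotient s), ← iterate_map_add,
      add_verschiebung_verschiebungQuotient hs, ih]

theorem eq_of_sum_truncate_iterate_verschiebung_eq {f g : ℕ → A}
    (h : ∀ M, ∑ m ∈ Finset.range M, truncate M (verschiebung^[m] (s (f m))) =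
      ∑ m ∈ Finset.range M, truncate M (verschiebung^[m] (s (g m)))) :
    f = g := by
  funext n
  induction n using Nat.strong_induction_on with
  | _ n ih =>
    have lower_terms : ∑ m ∈ Finset.range n, truncate (n + 1) (verschiebung^[m] (s (f m))) =
        ∑ m ∈ Finset.range n, truncate (n + 1) (verschiebung^[m] (s (g m))) :=
      Finset.sum_congr rfl fun m hm => by rw [ih m (Finset.mem_range.mp hm)]
    have last_term : truncate (n + 1) (verschiebung^[n] (s (f n))) =
        truncate (n + 1) (verschiebung^[n] (s (g n))) := by
      have := h (n + 1)
      rwa [Finset.sum_range_succ, Finset.sum_range_succ, lower_terms, add_right_inj] at this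
    have coeff_last (a : A) :
        (truncate (n + 1) (verschiebung^[n] (s a))).coeff (Fin.last n) = a := by
      rw [coeff_truncate, Fin.val_last]
      simpa only [zero_add, hs] using iterate_verschiebung_coeff (s a) n 0
    rw [← coeff_last (f n), last_term, coeff_last]

theorem existsUnique_truncate_eq_sum_iterate_verschiebung (z : WittVector p A) :
    ∃! f : ℕ → A, ∀ M,
      truncate M z = ∑ m ∈ Finset.range M, truncate M (verschiebung^[m] (s (f m))) := by
  refine existsUnique_of_exists_of_unique
    ⟨fun m => ((verschiebungQuotient s)^[m] z).coeff 0, fun M => ?_⟩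
    fun f g hf hg => eq_of_sum_truncate_iterate_verschiebung_eq hs fun M =>
      (hf M).symm.trans (hg M)
  conv_lhs => rw [← sum_add_iterate_verschiebung_verschiebungQuotient hs z M]
  rw [map_add, map_sum, truncate_iterate_verschiebung_self, add_zero]

end VerschiebungExpansion

section MonoidAlgebra

open WittVector

variable (p : ℕ) [Fact p.Prime] {R Q : Type*} [CommRing R] [AddCommMonoid Q]

/-- The sum `Σ_x [f_x T^x]` of the Teichmüller lifts of the terms of `f = Σ_x f_x T^x`. It is a
lift of `f` to `W(R[Q])`, in general different from `[f]`. -/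
noncomputable def termwiseTeichmuller (f : AddMonoidAlgebra R Q) :
    WittVector p (AddMonoidAlgebra R Q) :=
  f.coeff.sum fun x r => teichmuller p (AddMonoidAlgebra.single x r)

theorem termwiseTeichmuller_coeff_zero (f : AddMonoidAlgebra R Q) :
    (termwiseTeichmuller p f).coeff 0 = f :=
  calc (termwiseTeichmuller p f).coeff 0
      = f.coeff.sum fun x r => (teichmuller p (AddMonoidAlgebra.single x r)).coeff 0 :=
        map_finsuppSum constantCoeff _ _
    _ = f := by simp only [teichmuller_coeff_zero, AddMonoidAlgebra.sum_coeff_single]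

variable {p}

theorem map_termwiseTeichmuller {B : Type*} [AddCommMonoid B]
    (φ : WittVector p (AddMonoidAlgebra R Q) →+ B) (f : AddMonoidAlgebra R Q) :
    φ (termwiseTeichmuller p f) =
      ∑ᶠ x, φ (teichmuller p (AddMonoidAlgebra.single x (f.coeff x))) := by
  rw [termwiseTeichmuller, map_finsuppSum]
  refine (finsum_eq_sum_of_support_subset _ fun x hx => ?_).symm
  refine Finsupp.mem_support_iff.mpr fun coeff_eq_zero => hx ?_
  simp only [coeff_eq_zero, AddMonoidAlgebra.single_zero, teichmuller_zero, map_zero]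

theorem truncate_iterate_verschiebung_termwiseTeichmuller (M m : ℕ)
    (f : AddMonoidAlgebra R Q) :
    truncate M (verschiebung^[m] (termwiseTeichmuller p f)) =
      ∑ᶠ x, truncate M
        (verschiebung^[m] (teichmuller p (AddMonoidAlgebra.single x (f.coeff x)))) := by
  let truncateVerschiebung :
      WittVector p (AddMonoidAlgebra R Q) →+ TruncatedWittVector p M (AddMonoidAlgebra R Q) :=
    { toFun := fun w => truncate M (verschiebung^[m] w)
      map_zero' := by rw [iterate_map_zero, map_zero]
      map_add' := fun v w => by rw [iterate_map_add, map_add] }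
  exact map_termwiseTeichmuller truncateVerschiebung f

theorem wittVector_monoidAlgebra_unique_expansion_general
    (z : WittVector p (AddMonoidAlgebra R Q)) :
    ∃! a : ℕ → Q → R,
      (∀ m, (Function.support (a m)).Finite) ∧
      ∀ M, truncate M z = ∑ m ∈ Finset.range M, ∑ᶠ x,
        truncate M (verschiebung^[m] (teichmuller p (AddMonoidAlgebra.single x (a m x)))) := by
  obtain ⟨f, hf, f_unique⟩ :=
    existsUnique_truncate_eq_sum_iterate_verschiebung (termwiseTeichmuller_coeff_zero p) z
  simp only [truncate_iterate_verschiebung_termwiseTeichmuller] at hf f_unique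
  refine ⟨fun m => (f m).coeff, ⟨fun m => (f m).coeff.hasFiniteSupport, hf⟩, ?_⟩
  rintro b ⟨b_finite, hb⟩
  lift b to ℕ → Q →₀ R using b_finite
  rw [← f_unique (fun m => AddMonoidAlgebra.ofCoeff (b m)) hb]

end MonoidAlgebra

/-- Let `p` be a prime, `R` a `ℤ_(p)`-algebra (every prime `q ≠ p`
is invertible in `R`), and `P` an fs monoid with `P^gp` torsion free (modelled as an
additive submonoid of a torsion-free abelian group `G` which it generates, with `↥P`
finitely generated and `P` saturated in `G`).  Then every Witt vector
`z ∈ W(R[P])` can be written uniquely as a convergent sum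
`z = Σ_{m ≥ 0, x ∈ P} V^m([a_{x,m} · T^x])`:  there is a unique family
`(a_{x,m})` of elements of `R` such that for each `m` the set
`{x ∈ P | a_{x,m} ≠ 0}` is finite, and for every `M ∈ ℕ` the image of `z` in
`W_M(R[P])` equals the finite sum of the images of the terms
`V^m([a_{x,m} · T^x])` with `m < M`. -/
theorem wittVector_monoidAlgebra_unique_expansion
    (p : ℕ) [Fact p.Prime] (R : Type*) [CommRing R]
    (hR : ∀ q : ℕ, q.Prime → q ≠ p → IsUnit (q : R))
    {G : Type*} [AddCommGroup G]
    (hTF : ∀ (g : G) (n : ℕ), 0 < n → n • g = 0 → g = 0)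
    (P : AddSubmonoid G)
    (hGen : AddSubgroup.closure (P : Set G) = ⊤)
    (hFG : AddMonoid.FG ↥P)
    (hSat : ∀ g : G, ∀ n : ℕ, 0 < n → n • g ∈ P → g ∈ P)
    (z : WittVector p (AddMonoidAlgebra R ↥P)) :
    ∃! a : ℕ → ↥P → R,
      (∀ m : ℕ, (Function.support (a m)).Finite) ∧
      ∀ M : ℕ, WittVector.truncate M z =
        ∑ m ∈ Finset.range M, ∑ᶠ x : ↥P,
          WittVector.truncate M
            ((⇑(WittVector.verschiebung :
                WittVector p (AddMonoidAlgebra R ↥P) →+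
                  WittVector p (AddMonoidAlgebra R ↥P)))^[m]
              (WittVector.teichmuller p (AddMonoidAlgebra.single x (a m x)))) :=
  wittVector_monoidAlgebra_unique_expansion_general z
end

section
/- Let p be a prime, R a ℤ_(p)-algebra, and P an fs monoid with P^gp torsion free. Then every z ∈ W(R[P]) can be written uniquely as a convergent sum z = Σ_{x ∈ P[1/p]} b(ξ_x, x) of P-basic Witt differentials of degree 0: there is a unique family (ξ_x)_{x ∈ P[1/p]} with ξ_x ∈ V^{u(x)}·W(R) such that, for every m ∈ ℕ, all but finitely many ξ_x lie in V^m·W(R) and the image of z in W_m(R[P]) equals the sum of the images of the b(ξ_x, x) (all but finitely many of which are zero). Moreover, z lies in the kernel of W(R[P]) → W_m(R[P]) if and only if ξ_x ∈ V^m·W(R) for all x ∈ P[1/p]. -/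
open scoped BigOperators Classical

/-- `H` together with `ι : G →+ H` realizes the localization `G ⊗_ℤ ℤ[1/p]`
of the abelian group `G` away from the prime `p`. -/
structure IsPLocalization (p : ℕ) {G H : Type*} [AddCommGroup G] [AddCommGroup H]
    (ι : G →+ H) : Prop where
  smul_bij : Function.Bijective (fun h : H => p • h)
  exists_rep : ∀ h : H, ∃ (n : ℕ) (g : G), p ^ n • h = ι g
  ker_eq : ∀ g : G, ι g = 0 ↔ ∃ n : ℕ, p ^ n • g = 0

/-- `P[1/p]`, viewed inside `H = P^gp ⊗_ℤ ℤ[1/p]`. -/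
def pDiv (p : ℕ) {G H : Type*} [AddCommGroup G] [AddCommGroup H] (ι : G →+ H)
    (P : AddSubmonoid G) : Set H :=
  {h | ∃ n : ℕ, p ^ n • h ∈ ι '' (P : Set G)}

/-- `u(x)` : the least `n ∈ ℕ` such that `p^n • x` lies in the image of `P`. -/
noncomputable def uVal (p : ℕ) {G H : Type*} [AddCommGroup G] [AddCommGroup H]
    (ι : G →+ H) (P : AddSubmonoid G) (x : H) : ℕ :=
  sInf {n : ℕ | p ^ n • x ∈ ι '' (P : Set G)}

/-- The element `p^{u(x)} • x` of `P`, for `x ∈ P[1/p]` (junk value `0` otherwise). -/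
noncomputable def pLift (p : ℕ) {G H : Type*} [AddCommGroup G] [AddCommGroup H]
    (ι : G →+ H) (P : AddSubmonoid G) (x : H) : ↥P :=
  if h : p ^ uVal p ι P x • x ∈ ι '' (P : Set G) then
    ⟨((Set.mem_image _ _ _).1 h).choose, ((Set.mem_image _ _ _).1 h).choose_spec.1⟩
  else 0

/-- The `P`-basic Witt differential of degree `0`:
`b(V^{u(x)} η, x) = V^{u(x)} (η · X^{p^{u(x)} x}) ∈ W(R[P])`. -/
noncomputable def bwitt (p : ℕ) [Fact p.Prime] {G H : Type*}
    [AddCommGroup G] [AddCommGroup H] (ι : G →+ H) (P : AddSubmonoid G)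
    {R : Type*} [CommRing R] (η : WittVector p R) (x : H) :
    WittVector p (AddMonoidAlgebra R ↥P) :=
  (⇑(WittVector.verschiebung :
      WittVector p (AddMonoidAlgebra R ↥P) →+
        WittVector p (AddMonoidAlgebra R ↥P)))^[uVal p ι P x]
    (WittVector.map (algebraMap R (AddMonoidAlgebra R ↥P)) η *
      WittVector.teichmuller p (AddMonoidAlgebra.single (pLift p ι P x) (1 : R)))

/-- The condition that the family `η` (encoding the `P`-basic Witt differentials
`b(V^{u(x)} (η x), x)` of degree `0`) is an expansion of `z`:  for every `m` all but
finitely many of the coefficients `ξ_x = V^{u(x)} (η x)` lie in `V^m W(R)`, and for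
every `m` the image of `z` in `W_m(R[P])` is the sum of the images of the
`b(ξ_x, x)`. -/
def IsBasicExpansion (p : ℕ) [Fact p.Prime] {G H : Type*}
    [AddCommGroup G] [AddCommGroup H] (ι : G →+ H) (P : AddSubmonoid G)
    {R : Type*} [CommRing R] (z : WittVector p (AddMonoidAlgebra R ↥P))
    (η : {x : H // x ∈ pDiv p ι P} → WittVector p R) : Prop :=
  (∀ m : ℕ,
      {x : {x : H // x ∈ pDiv p ι P} |
        (⇑(WittVector.verschiebung : WittVector p R →+ WittVector p R))^[uVal p ι P x.1]
            (η x) ∉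
          Set.range
            (⇑(WittVector.verschiebung : WittVector p R →+ WittVector p R))^[m]}.Finite) ∧
  ∀ m : ℕ, WittVector.truncate m z =
    ∑ᶠ x : {x : H // x ∈ pDiv p ι P},
      WittVector.truncate m (bwitt p ι P (η x) x.1)

/-!
The `n`-th Witt coordinate of `b(ξ, x)` is the monomial `ξₙ T^{pⁿx}`, which vanishes for `n < u(x)`,
and for fixed `n` the map `x ↦ pⁿx` is a bijection from `{x ∈ P[1/p] | u(x) ≤ n}` onto `P`.

Uniqueness: if `z ∈ Vᵐ W(R[P])` and all `b(ξₓ, x)` lie in `Vᵐ W(R[P])`, then the `m`-th coordinate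
of `z` is the sum of those of the `b(ξₓ, x)`, which are monomials with distinct exponents. So if `z`
lies in `Vᵐ⁺¹ W(R[P])`, then each `b(ξₓ, x)` does, by induction on `m`.

Existence: since `∑ₖ [fₖ Tᵏ]` lifts `f = ∑ₖ fₖ Tᵏ`, successive approximation gives
`z = ∑ₙ ∑ₖ Vⁿ[cₙₖ Tᵏ]`. For each `x`, the terms with `k = pⁿx`, `n ≥ u(x)`, add up to a basic Witt
differential `b(ξₓ, x)` by the expansion `w = ∑ₙ Vⁿ[wₙ]`, and each term belongs to exactly one `x`.
-/

section AddMonoidAlgebra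

theorem eq_zero_of_sum_single_eq_zero {α R M : Type*} [Semiring R] {s : Finset α} {e : α → M}
    {a : α → R} (he : Set.InjOn e {i | a i ≠ 0})
    (hsum : ∑ i ∈ s, AddMonoidAlgebra.single (e i) (a i) = 0) {i : α} (hi : i ∈ s) : a i = 0 := by
  by_contra hai
  have hcoeff : ∑ j ∈ s, Finsupp.single (e j) (a j) (e i) = 0 := by
    simpa using congrArg (fun f => f.coeff (e i)) hsum
  rw [Finset.sum_eq_single_of_mem i hi, Finsupp.single_eq_same] at hcoeff
  · exact hai hcoeff
  · intro j _ hji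
    by_cases haj : a j = 0
    · rw [haj, Finsupp.single_zero, Finsupp.zero_apply]
    · exact Finsupp.single_eq_of_ne fun h => hji (he haj hai h.symm)

end AddMonoidAlgebra

section WittVector

open WittVector

variable {p : ℕ} [Fact p.Prime] {S : Type*} [CommRing S]

local notation "𝕎" => WittVector p

theorem ghostComponent_mk_coeff_mul_pow (w : 𝕎 S) (a : S) (n : ℕ) :
    ghostComponent n (WittVector.mk p fun i => w.coeff i * a ^ p ^ i) =
      ghostComponent n (w * teichmuller p a) := by
  rw [map_mul, ghostComponent_teichmuller, ghostComponent_apply, ghostComponent_apply,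
    aeval_wittPolynomial, aeval_wittPolynomial, Finset.sum_mul]
  refine Finset.sum_congr rfl fun i hi => ?_
  have hpow : a ^ p ^ n = (a ^ p ^ i) ^ p ^ (n - i) := by
    rw [← pow_mul, ← pow_add, Nat.add_sub_cancel' (Finset.mem_range_succ_iff.1 hi)]
  rw [hpow, coeff_mk, mul_pow, mul_assoc]

/- The ghost map is injective over `ℚ`-algebras; the identity descends from there to integral
polynomial rings, and these surject onto every commutative ring. -/
theorem mul_teichmuller (w : 𝕎 S) (a : S) :
    w * teichmuller p a = WittVector.mk p fun n => w.coeff n * a ^ p ^ n := by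
  have map_mk : ∀ {A B : Type _} [CommRing A] [CommRing B] (f : A →+* B) (w : 𝕎 A) (a : A),
      map f (WittVector.mk p fun n => w.coeff n * a ^ p ^ n) =
        WittVector.mk p fun n => (map f w).coeff n * f a ^ p ^ n := by
    intro A B _ _ f w a
    ext n
    simp only [map_coeff, coeff_mk, map_mul, map_pow]
  have rational (w : 𝕎 (MvPolynomial S ℚ)) (a : MvPolynomial S ℚ) :
      w * teichmuller p a = WittVector.mk p fun n => w.coeff n * a ^ p ^ n :=
    (ghostMap.bijective_of_invertible p (MvPolynomial S ℚ)).1 <|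
      funext fun n => (ghostComponent_mk_coeff_mul_pow w a n).symm
  have integral (w : 𝕎 (MvPolynomial S ℤ)) (a : MvPolynomial S ℤ) :
      w * teichmuller p a = WittVector.mk p fun n => w.coeff n * a ^ p ^ n := by
    refine map_injective (MvPolynomial.map (Int.castRingHom ℚ))
      (MvPolynomial.map_injective _ Int.cast_injective) ?_
    rw [map_mul, map_teichmuller, rational, map_mk]
  obtain ⟨a, rfl⟩ := MvPolynomial.counit_surjective S a
  obtain ⟨w, rfl⟩ :=
    map_surjective (MvPolynomial.counit S) (MvPolynomial.counit_surjective S) w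
  have h := congrArg (map (MvPolynomial.counit S)) (integral w a)
  rwa [map_mul, map_teichmuller, map_mk] at h

theorem mem_range_iterate_verschiebung {w : 𝕎 S} {m : ℕ} :
    w ∈ Set.range (⇑(verschiebung : 𝕎 S →+ 𝕎 S))^[m] ↔ truncate m w = 0 := by
  rw [← RingHom.mem_ker, mem_ker_truncate]
  constructor
  · rintro ⟨v, rfl⟩ n hn
    exact iterate_verschiebung_coeff_eq_zero v hn
  · exact fun h => ⟨_, (eq_iterate_verschiebung h).symm⟩

theorem truncate_succ_eq_zero_iff {w : 𝕎 S} {m : ℕ} :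
    truncate (m + 1) w = 0 ↔ truncate m w = 0 ∧ w.coeff m = 0 := by
  simp only [← RingHom.mem_ker, mem_ker_truncate, Nat.forall_lt_succ_right]

theorem eq_zero_of_forall_truncate_eq_zero {w : 𝕎 S} (h : ∀ m, truncate m w = 0) : w = 0 := by
  ext n
  rw [(truncate_succ_eq_zero_iff.1 (h (n + 1))).2, zero_coeff]

theorem iterate_verschiebung_sum {α : Type*} (s : Finset α) (f : α → 𝕎 S) (m : ℕ) :
    verschiebung^[m] (∑ i ∈ s, f i) = ∑ i ∈ s, verschiebung^[m] (f i) := by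
  induction m with
  | zero => rfl
  | succ m ih => simp only [Function.iterate_succ_apply', ih, map_sum]

theorem coeff_sum_of_truncate_eq_zero {α : Type*} {s : Finset α} {f : α → 𝕎 S} {m : ℕ}
    (h : ∀ i ∈ s, truncate m (f i) = 0) :
    (∑ i ∈ s, f i).coeff m = ∑ i ∈ s, (f i).coeff m := by
  have hf : ∀ i ∈ s, f i = verschiebung^[m] ((f i).shift m) := fun i hi =>
    eq_iterate_verschiebung ((mem_ker_truncate m (f i)).1 (h i hi))
  calc (∑ i ∈ s, f i).coeff m
      = (verschiebung^[m] (∑ i ∈ s, (f i).shift m)).coeff (0 + m) := by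
        rw [iterate_verschiebung_sum, ← Finset.sum_congr rfl hf, zero_add]
    _ = constantCoeff (∑ i ∈ s, (f i).shift m) := iterate_verschiebung_coeff _ m 0
    _ = ∑ i ∈ s, (f i).coeff m := by
        simp only [map_sum, constantCoeff_apply, shift_coeff, add_zero]

theorem coeff_iterate_verschiebung_teichmuller (n : ℕ) (a : S) (k : ℕ) :
    (verschiebung^[n] (teichmuller p a)).coeff k = if k = n then a else 0 := by
  rcases lt_or_ge k n with hkn | hnk
  · rw [iterate_verschiebung_coeff_eq_zero _ hkn, if_neg hkn.ne]
  · obtain ⟨j, rfl⟩ := Nat.exists_eq_add_of_le' hnk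
    rw [iterate_verschiebung_coeff]
    rcases Nat.eq_zero_or_pos j with rfl | hj
    · rw [teichmuller_coeff_zero, if_pos (zero_add n)]
    · rw [teichmuller_coeff_pos p a j hj, if_neg (by omega)]

theorem truncate_eq_sum_teichmuller (w : 𝕎 S) (m : ℕ) :
    truncate m w =
      ∑ n ∈ Finset.range m, truncate m (verschiebung^[n] (teichmuller p (w.coeff n))) := by
  rw [← map_sum]
  ext i
  rw [coeff_truncate, coeff_truncate, sum_coeff_eq_coeff_sum]
  · simp only [coeff_iterate_verschiebung_teichmuller, Finset.sum_ite_eq, Finset.mem_range,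
      if_pos i.is_lt]
  · refine fun k => ⟨fun x y => Subtype.ext ?_⟩
    have index_eq : ∀ n, (verschiebung^[n] (teichmuller p (w.coeff n))).coeff k ≠ 0 → k = n := by
      intro n hn
      rw [coeff_iterate_verschiebung_teichmuller] at hn
      exact of_not_not fun hne => hn (if_neg hne)
    exact (index_eq _ x.2.2).symm.trans (index_eq _ y.2.2)

theorem eq_sum_iterate_verschiebung_add {r s : ℕ → 𝕎 S}
    (h : ∀ n, r n = s n + verschiebung (r (n + 1))) (m : ℕ) :
    r 0 = ∑ n ∈ Finset.range m, verschiebung^[n] (s n) + verschiebung^[m] (r m) := by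
  induction m with
  | zero => rw [Finset.sum_range_zero, zero_add, Function.iterate_zero_apply]
  | succ m ih =>
    rw [ih, h m, iterate_map_add, Finset.sum_range_succ, Function.iterate_succ_apply, add_assoc]

theorem eq_add_verschiebung_shift {w s : 𝕎 S} (h : s.coeff 0 = w.coeff 0) :
    w = s + verschiebung ((w - s).shift 1) := by
  have h0 : (w - s).coeff 0 = 0 := by
    rw [← constantCoeff_apply, map_sub, constantCoeff_apply, constantCoeff_apply, h, sub_self]
  have hshift : w - s = verschiebung ((w - s).shift 1) :=
    eq_iterate_verschiebung (n := 1) fun i hi => by rwa [Nat.lt_one_iff.1 hi]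
  exact sub_eq_iff_eq_add'.1 hshift

theorem exists_truncate_eq_sum_iterate_verschiebung {σ : S → 𝕎 S}
    (hσ : ∀ a, (σ a).coeff 0 = a) (z : 𝕎 S) :
    ∃ c : ℕ → S, ∀ m,
      truncate m z = ∑ n ∈ Finset.range m, truncate m (verschiebung^[n] (σ (c n))) := by
  let remainder : ℕ → 𝕎 S := fun n => (fun w => (w - σ (w.coeff 0)).shift 1)^[n] z
  have hstep : ∀ n,
      remainder n = σ ((remainder n).coeff 0) + verschiebung (remainder (n + 1)) := by
    intro n
    simp only [remainder, Function.iterate_succ_apply']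
    exact eq_add_verschiebung_shift (hσ _)
  refine ⟨fun n => (remainder n).coeff 0, fun m => ?_⟩
  have htail : truncate m (verschiebung^[m] (remainder m)) = 0 :=
    mem_range_iterate_verschiebung.1 ⟨_, rfl⟩
  calc truncate m z
      = truncate m (∑ n ∈ Finset.range m, verschiebung^[n] (σ ((remainder n).coeff 0)) +
          verschiebung^[m] (remainder m)) :=
        congrArg (truncate m) (eq_sum_iterate_verschiebung_add hstep m)
    _ = _ := by rw [map_add, htail, add_zero, map_sum]

/-- The lift `∑ₖ [fₖ Tᵏ]` of `f = ∑ₖ fₖ Tᵏ` to `W(R[M])`. It differs from the Teichmüller lift `[f]`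
and is the section of `W(R[M]) → R[M]` whose shifts `Vⁿ` regroup into basic Witt differentials. -/
noncomputable def sumTeichmullerMonomial (p : ℕ) [Fact p.Prime] {R M : Type*} [CommRing R]
    [AddCommMonoid M] (f : AddMonoidAlgebra R M) : WittVector p (AddMonoidAlgebra R M) :=
  f.coeff.sum fun k a => teichmuller p (AddMonoidAlgebra.single k a)

variable {R M : Type*} [CommRing R] [AddCommMonoid M]

theorem coeff_zero_sumTeichmullerMonomial (f : AddMonoidAlgebra R M) :
    (sumTeichmullerMonomial p f).coeff 0 = f := by
  rw [sumTeichmullerMonomial, ← constantCoeff_apply, map_finsuppSum]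
  simp only [constantCoeff_apply, teichmuller_coeff_zero]
  exact AddMonoidAlgebra.sum_coeff_single f

theorem truncate_iterate_verschiebung_sumTeichmullerMonomial (f : AddMonoidAlgebra R M) (m n : ℕ) :
    truncate m (verschiebung^[n] (sumTeichmullerMonomial p f)) =
      ∑ᶠ k, truncate m
        (verschiebung^[n] (teichmuller p (AddMonoidAlgebra.single k (f.coeff k)))) := by
  rw [sumTeichmullerMonomial, Finsupp.sum, iterate_verschiebung_sum, map_sum]
  refine (finsum_eq_finsetSum_of_support_subset _ fun k hk => ?_).symm
  refine Finset.mem_coe.2 (Finsupp.mem_support_iff.2 fun hfk => hk ?_)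
  simp only [hfk, AddMonoidAlgebra.single_zero, teichmuller_zero, iterate_map_zero, map_zero]

end WittVector

section PDivisible

variable {p : ℕ} {G H : Type*} [AddCommGroup G] [AddCommGroup H] {ι : G →+ H} {P : AddSubmonoid G}

theorem IsPLocalization.injective (hloc : IsPLocalization p ι) (hG : IsSMulRegular G p) :
    Function.Injective ι := by
  refine (injective_iff_map_eq_zero ι).2 fun g hg => ?_
  obtain ⟨n, hn⟩ := (hloc.ker_eq g).1 hg
  exact (hG.pow n).right_eq_zero_of_smul hn

theorem IsPLocalization.pow_smul_surjective (hloc : IsPLocalization p ι) (n : ℕ) :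
    Function.Surjective fun h : H => p ^ n • h := by
  rw [← smul_iterate]
  exact hloc.smul_bij.surjective.iterate n

theorem map_pLift {x : H} (hx : x ∈ pDiv p ι P) :
    ι (pLift p ι P x : G) = p ^ uVal p ι P x • x := by
  have hmem : p ^ uVal p ι P x • x ∈ ι '' (P : Set G) :=
    Nat.sInf_mem (s := {n : ℕ | p ^ n • x ∈ ι '' (P : Set G)}) hx
  rw [pLift, dif_pos hmem]
  exact ((Set.mem_image _ _ _).1 hmem).choose_spec.2

variable (p ι P) in
/-- The element `pⁿ • x` of `P`, for `x ∈ P[1/p]` and `n ≥ u(x)`; for `n < u(x)`, where `pⁿ • x` is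
not in `P`, the truncated subtraction gives the junk value `p^{u(x)} • x`. -/
noncomputable def pPowLift (n : ℕ) (x : H) : P :=
  p ^ (n - uVal p ι P x) • pLift p ι P x

theorem map_pPowLift {x : H} (hx : x ∈ pDiv p ι P) {n : ℕ} (hn : uVal p ι P x ≤ n) :
    ι (pPowLift p ι P n x : G) = p ^ n • x := by
  rw [pPowLift, AddSubmonoidClass.coe_nsmul, map_nsmul, map_pLift hx, ← mul_smul, ← pow_add,
    Nat.sub_add_cancel hn]

theorem injOn_pPowLift (hH : IsSMulRegular H p) (n : ℕ) :
    Set.InjOn (fun x : pDiv p ι P => pPowLift p ι P n x.1) {x | uVal p ι P x.1 ≤ n} := by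
  intro x hx y hy hxy
  refine Subtype.ext (hH.pow n ?_)
  change p ^ n • x.1 = p ^ n • y.1
  rw [← map_pPowLift x.2 hx, ← map_pPowLift y.2 hy]
  exact congrArg (fun k : P => ι k) hxy

theorem bijOn_pPowLift (hloc : IsPLocalization p ι) (hι : Set.InjOn ι P) (n : ℕ) :
    Set.BijOn (fun x : pDiv p ι P => pPowLift p ι P n x.1) {x | uVal p ι P x.1 ≤ n} Set.univ := by
  refine ⟨Set.mapsTo_univ _ _, injOn_pPowLift hloc.smul_bij.1 n, fun k _ => ?_⟩
  obtain ⟨x, hx⟩ := hloc.pow_smul_surjective n (ι k)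
  have hmem : p ^ n • x ∈ ι '' (P : Set G) := ⟨k, k.2, hx.symm⟩
  have hu : uVal p ι P x ≤ n := Nat.sInf_le (s := {n : ℕ | p ^ n • x ∈ ι '' (P : Set G)}) hmem
  exact ⟨⟨x, n, hmem⟩, hu,
    Subtype.ext (hι (SetLike.coe_mem _) k.2 ((map_pPowLift ⟨n, hmem⟩ hu).trans hx))⟩

end PDivisible

section BasicWittDifferentials

open WittVector

variable {p : ℕ} [Fact p.Prime] {G H : Type*} [AddCommGroup G] [AddCommGroup H] {ι : G →+ H}
  {P : AddSubmonoid G} {R : Type*} [CommRing R]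

theorem coeff_bwitt (η : WittVector p R) (x : H) (n : ℕ) :
    (bwitt p ι P η x).coeff n =
      AddMonoidAlgebra.single (pPowLift p ι P n x)
        ((verschiebung^[uVal p ι P x] η).coeff n) := by
  rw [bwitt]
  rcases lt_or_ge n (uVal p ι P x) with hn | hn
  · rw [iterate_verschiebung_coeff_eq_zero _ hn, iterate_verschiebung_coeff_eq_zero _ hn,
      AddMonoidAlgebra.single_zero]
  · obtain ⟨j, rfl⟩ := Nat.exists_eq_add_of_le' hn
    rw [iterate_verschiebung_coeff, iterate_verschiebung_coeff, mul_teichmuller, coeff_mk,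
      map_coeff, AddMonoidAlgebra.single_pow, one_pow, AddMonoidAlgebra.coe_algebraMap,
      pPowLift, Nat.add_sub_cancel]
    simp only [Function.comp_apply, Algebra.algebraMap_self_apply,
      AddMonoidAlgebra.single_mul_single, zero_add, mul_one]

theorem bwitt_sub (η η' : WittVector p R) (x : H) :
    bwitt p ι P (η - η') x = bwitt p ι P η x - bwitt p ι P η' x := by
  rw [bwitt, map_sub, sub_mul, iterate_map_sub, bwitt, bwitt]

theorem truncate_bwitt_eq_zero_iff {η : WittVector p R} {x : H} {m : ℕ} :
    truncate m (bwitt p ι P η x) = 0 ↔ truncate m (verschiebung^[uVal p ι P x] η) = 0 := by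
  simp only [← RingHom.mem_ker, mem_ker_truncate, coeff_bwitt, AddMonoidAlgebra.single_eq_zero]

theorem eq_zero_of_bwitt_eq_zero {η : WittVector p R} {x : H} (h : bwitt p ι P η x = 0) :
    η = 0 := by
  have hV : verschiebung^[uVal p ι P x] η = 0 := eq_zero_of_forall_truncate_eq_zero fun m =>
    truncate_bwitt_eq_zero_iff.1 (h ▸ map_zero (truncate m))
  exact (verschiebung_injective p R).iterate _ (hV.trans (iterate_map_zero _ _).symm)

theorem isBasicExpansion_iff {z : WittVector p (AddMonoidAlgebra R P)}
    {η : pDiv p ι P → WittVector p R} :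
    IsBasicExpansion p ι P z η ↔
      (∀ m, Function.HasFiniteSupport fun x => truncate m (bwitt p ι P (η x) x.1)) ∧
        ∀ m, truncate m z = ∑ᶠ x, truncate m (bwitt p ι P (η x) x.1) := by
  simp only [IsBasicExpansion, mem_range_iterate_verschiebung, ← truncate_bwitt_eq_zero_iff,
    Function.HasFiniteSupport]
  rfl

theorem IsBasicExpansion.sub {z z' : WittVector p (AddMonoidAlgebra R P)}
    {η η' : pDiv p ι P → WittVector p R} (h : IsBasicExpansion p ι P z η)
    (h' : IsBasicExpansion p ι P z' η') : IsBasicExpansion p ι P (z - z') (η - η') := by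
  rw [isBasicExpansion_iff] at h h' ⊢
  simp only [Pi.sub_apply, bwitt_sub, map_sub]
  refine ⟨fun m => (h.1 m).sub (h'.1 m), fun m => ?_⟩
  rw [h.2 m, h'.2 m, finsum_sub_distrib (h.1 m) (h'.1 m)]

theorem coeff_bwitt_eq_zero_of_sum (hH : IsSMulRegular H p) {η : pDiv p ι P → WittVector p R}
    {s : Finset (pDiv p ι P)} {m : ℕ}
    (hsum : ∑ x ∈ s, (bwitt p ι P (η x) x.1).coeff m = 0) {x : pDiv p ι P} (hx : x ∈ s) :
    (bwitt p ι P (η x) x.1).coeff m = 0 := by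
  have uVal_le {y : pDiv p ι P} (hy : (verschiebung^[uVal p ι P y.1] (η y)).coeff m ≠ 0) :
      uVal p ι P y.1 ≤ m :=
    not_lt.1 fun hlt => hy (iterate_verschiebung_coeff_eq_zero _ hlt)
  simp only [coeff_bwitt] at hsum
  rw [coeff_bwitt, AddMonoidAlgebra.single_eq_zero]
  exact eq_zero_of_sum_single_eq_zero ((injOn_pPowLift hH m).mono fun _ => uVal_le) hsum hx

theorem IsBasicExpansion.truncate_bwitt_eq_zero (hH : IsSMulRegular H p)
    {z : WittVector p (AddMonoidAlgebra R P)} {η : pDiv p ι P → WittVector p R}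
    (h : IsBasicExpansion p ι P z η) {m : ℕ} (hz : truncate m z = 0) (x : pDiv p ι P) :
    truncate m (bwitt p ι P (η x) x.1) = 0 := by
  rw [isBasicExpansion_iff] at h
  induction m generalizing x with
  | zero => exact TruncatedWittVector.ext fun i => i.elim0
  | succ m ih =>
    have ih := ih (truncate_succ_eq_zero_iff.1 hz).1
    by_contra hx
    let s := (h.1 (m + 1)).toFinset
    have hsum : truncate (m + 1) (∑ x ∈ s, bwitt p ι P (η x) x.1) = 0 := by
      rw [map_sum, ← hz, h.2, finsum_eq_sum _ (h.1 (m + 1))]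
    have hcoeff : ∑ x ∈ s, (bwitt p ι P (η x) x.1).coeff m = 0 := by
      rw [← coeff_sum_of_truncate_eq_zero fun x _ => ih x]
      exact (truncate_succ_eq_zero_iff.1 hsum).2
    have hxs : x ∈ s := (Set.Finite.mem_toFinset _).2 hx
    exact hx (truncate_succ_eq_zero_iff.2 ⟨ih x, coeff_bwitt_eq_zero_of_sum hH hcoeff hxs⟩)

theorem IsBasicExpansion.truncate_eq_zero_iff (hH : IsSMulRegular H p)
    {z : WittVector p (AddMonoidAlgebra R P)} {η : pDiv p ι P → WittVector p R}
    (h : IsBasicExpansion p ι P z η) (m : ℕ) :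
    truncate m z = 0 ↔ ∀ x, truncate m (bwitt p ι P (η x) x.1) = 0 := by
  refine ⟨fun hz => h.truncate_bwitt_eq_zero hH hz, fun hb => ?_⟩
  rw [h.2 m, finsum_eq_zero_of_forall_eq_zero hb]

theorem IsBasicExpansion.unique (hH : IsSMulRegular H p)
    {z : WittVector p (AddMonoidAlgebra R P)} {η η' : pDiv p ι P → WittVector p R}
    (h : IsBasicExpansion p ι P z η) (h' : IsBasicExpansion p ι P z η') : η = η' := by
  have hzero : IsBasicExpansion p ι P 0 (η - η') := sub_self z ▸ h.sub h'
  refine sub_eq_zero.1 (funext fun x => eq_zero_of_bwitt_eq_zero (ι := ι) (P := P) (x := x.1) ?_)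
  exact eq_zero_of_forall_truncate_eq_zero fun m =>
    hzero.truncate_bwitt_eq_zero hH (map_zero (truncate m)) x

/-- The family `(ηₓ)` collecting the coefficients of a sequence `c` in `R[P]` along the exponents
`pⁿx`: the coefficient of `T^{pⁿx}` in `cₙ`, for `n ≥ u(x)`, is the Witt coordinate of index
`n - u(x)` of `ηₓ`, hence the one of index `n` of `ξₓ`. -/
noncomputable def regroup (p : ℕ) (ι : G →+ H) (c : ℕ → AddMonoidAlgebra R P)
    (x : pDiv p ι P) : WittVector p R :=
  WittVector.mk p fun j =>
    (c (j + uVal p ι P x.1)).coeff (pPowLift p ι P (j + uVal p ι P x.1) x.1)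

theorem coeff_bwitt_regroup (c : ℕ → AddMonoidAlgebra R P) (x : pDiv p ι P) (n : ℕ) :
    (bwitt p ι P (regroup p ι c x) x.1).coeff n =
      if uVal p ι P x.1 ≤ n then
        AddMonoidAlgebra.single (pPowLift p ι P n x.1) ((c n).coeff (pPowLift p ι P n x.1))
      else 0 := by
  rw [coeff_bwitt]
  split_ifs with hn
  · obtain ⟨j, rfl⟩ := Nat.exists_eq_add_of_le' hn
    rw [iterate_verschiebung_coeff, regroup, coeff_mk]
  · rw [iterate_verschiebung_coeff_eq_zero _ (not_le.1 hn), AddMonoidAlgebra.single_zero]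

theorem finsum_coeff_bwitt_regroup (hloc : IsPLocalization p ι) (hι : Set.InjOn ι P)
    {A : Type*} [AddCommMonoid A] {g : AddMonoidAlgebra R P → A} (hg : g 0 = 0)
    (c : ℕ → AddMonoidAlgebra R P) (n : ℕ) :
    ∑ᶠ x : pDiv p ι P, g ((bwitt p ι P (regroup p ι c x) x.1).coeff n) =
      ∑ᶠ k, g (AddMonoidAlgebra.single k ((c n).coeff k)) := by
  rw [← finsum_mem_univ, ← finsum_mem_univ fun k => g _]
  refine (finsum_mem_inter_support_eq' _ _ {x | uVal p ι P x.1 ≤ n} fun x hx => ?_).trans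
    (finsum_mem_eq_of_bijOn _ (bijOn_pPowLift hloc hι n) fun x hx => ?_)
  · have uVal_le : uVal p ι P x.1 ≤ n := by
      by_contra hlt
      exact hx (by simp only [coeff_bwitt_regroup, if_neg hlt, hg])
    exact iff_of_true trivial uVal_le
  · rw [coeff_bwitt_regroup, if_pos (show uVal p ι P x.1 ≤ n from hx)]

theorem hasFiniteSupport_coeff_bwitt_regroup (hH : IsSMulRegular H p)
    (c : ℕ → AddMonoidAlgebra R P) (n : ℕ) :
    Function.HasFiniteSupport fun x : pDiv p ι P =>
      (bwitt p ι P (regroup p ι c x) x.1).coeff n := by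
  have support_subset {x : pDiv p ι P}
      (hx : (bwitt p ι P (regroup p ι c x) x.1).coeff n ≠ 0) :
      uVal p ι P x.1 ≤ n ∧ pPowLift p ι P n x.1 ∈ (c n).coeff.support := by
    rw [coeff_bwitt_regroup, ite_ne_right_iff, AddMonoidAlgebra.single_ne_zero] at hx
    exact ⟨hx.1, Finsupp.mem_support_iff.2 hx.2⟩
  refine Set.Finite.of_finite_image (f := fun x => pPowLift p ι P n x.1)
    ((c n).coeff.support.finite_toSet.subset ?_)
    ((injOn_pPowLift hH n).mono fun _ hx => (support_subset hx).1)
  rintro _ ⟨x, hx, rfl⟩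
  exact (support_subset hx).2

theorem exists_isBasicExpansion (hloc : IsPLocalization p ι) (hι : Set.InjOn ι P)
    (z : WittVector p (AddMonoidAlgebra R P)) : ∃ η, IsBasicExpansion p ι P z η := by
  obtain ⟨c, hc⟩ :=
    exists_truncate_eq_sum_iterate_verschiebung coeff_zero_sumTeichmullerMonomial z
  let truncVTeich (m n : ℕ) (f : AddMonoidAlgebra R P) :=
    truncate m (verschiebung^[n] (teichmuller p f))
  have truncVTeich_zero (m n : ℕ) : truncVTeich m n 0 = 0 := by
    simp only [truncVTeich, teichmuller_zero, iterate_map_zero, map_zero]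
  have hfin (m n : ℕ) : Function.HasFiniteSupport fun x : pDiv p ι P =>
      truncVTeich m n ((bwitt p ι P (regroup p ι c x) x.1).coeff n) :=
    (hasFiniteSupport_coeff_bwitt_regroup hloc.smul_bij.1 c n).fun_comp (truncVTeich_zero m n)
  have hbwitt (m : ℕ) (x : pDiv p ι P) : truncate m (bwitt p ι P (regroup p ι c x) x.1) =
      ∑ n ∈ Finset.range m, truncVTeich m n ((bwitt p ι P (regroup p ι c x) x.1).coeff n) :=
    truncate_eq_sum_teichmuller _ m
  refine ⟨regroup p ι c, isBasicExpansion_iff.2 ⟨fun m => ?_, fun m => ?_⟩⟩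
  · simp only [hbwitt]
    exact Function.HasFiniteSupport.sum (hfin m) _
  · calc truncate m z
        = ∑ n ∈ Finset.range m, ∑ᶠ k,
            truncVTeich m n (AddMonoidAlgebra.single k ((c n).coeff k)) := by
          simp only [hc, truncate_iterate_verschiebung_sumTeichmullerMonomial, truncVTeich]
      _ = ∑ n ∈ Finset.range m, ∑ᶠ x : pDiv p ι P,
            truncVTeich m n ((bwitt p ι P (regroup p ι c x) x.1).coeff n) :=
          Finset.sum_congr rfl fun n _ =>
            (finsum_coeff_bwitt_regroup hloc hι (truncVTeich_zero m n) c n).symm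
      _ = ∑ᶠ x : pDiv p ι P, truncate m (bwitt p ι P (regroup p ι c x) x.1) := by
          simp only [hbwitt]
          exact sum_finsum_comm _ _ fun n _ => hfin m n

end BasicWittDifferentials

theorem wittVector_unique_basic_expansion_general
    (p : ℕ) [Fact p.Prime] {R : Type*} [CommRing R]
    {G H : Type*} [AddCommGroup G] [AddCommGroup H]
    (ι : G →+ H) (hloc : IsPLocalization p ι)
    (P : AddSubmonoid G) (hι : Set.InjOn ι P)
    (z : WittVector p (AddMonoidAlgebra R ↥P)) :
    (∃! η : {x : H // x ∈ pDiv p ι P} → WittVector p R,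
        IsBasicExpansion p ι P z η) ∧
    ∀ η : {x : H // x ∈ pDiv p ι P} → WittVector p R,
      IsBasicExpansion p ι P z η →
      ∀ m : ℕ, (WittVector.truncate m z = 0 ↔
        ∀ x : {x : H // x ∈ pDiv p ι P},
          (⇑(WittVector.verschiebung : WittVector p R →+ WittVector p R))^[uVal p ι P x.1]
              (η x) ∈
            Set.range
              (⇑(WittVector.verschiebung : WittVector p R →+ WittVector p R))^[m]) := by
  have hH : IsSMulRegular H p := hloc.smul_bij.injective
  refine ⟨existsUnique_of_exists_of_unique (exists_isBasicExpansion hloc hι z)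
    fun _ _ h h' => h.unique hH h', fun η h m => ?_⟩
  simp only [mem_range_iterate_verschiebung, ← truncate_bwitt_eq_zero_iff]
  exact h.truncate_eq_zero_iff hH m

/-- Let `p` be a prime, `R` a `ℤ_(p)`-algebra and `P` an fs monoid
with `P^gp` torsion free.  Every `z ∈ W(R[P])` is uniquely a convergent sum of
`P`-basic Witt differentials of degree `0` (parametrized here by the family of the
`η_x` with `ξ_x = V^{u(x)} η_x`); moreover `z` lies in the kernel of
`W(R[P]) → W_m(R[P])` if and only if all the coefficients `ξ_x` lie in
`V^m W(R)`. -/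
theorem wittVector_unique_basic_expansion
    (p : ℕ) [Fact p.Prime] (R : Type*) [CommRing R]
    (hR : ∀ q : ℕ, q.Prime → q ≠ p → IsUnit (q : R))
    {G H : Type*} [AddCommGroup G] [AddCommGroup H]
    (hTF : ∀ (g : G) (n : ℕ), 0 < n → n • g = 0 → g = 0)
    (ι : G →+ H) (hloc : IsPLocalization p ι)
    (P : AddSubmonoid G)
    (hGen : AddSubgroup.closure (P : Set G) = ⊤)
    (hFG : AddMonoid.FG ↥P)
    (hSat : ∀ g : G, ∀ n : ℕ, 0 < n → n • g ∈ P → g ∈ P)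
    (z : WittVector p (AddMonoidAlgebra R ↥P)) :
    (∃! η : {x : H // x ∈ pDiv p ι P} → WittVector p R,
        IsBasicExpansion p ι P z η) ∧
    ∀ η : {x : H // x ∈ pDiv p ι P} → WittVector p R,
      IsBasicExpansion p ι P z η →
      ∀ m : ℕ, (WittVector.truncate m z = 0 ↔
        ∀ x : {x : H // x ∈ pDiv p ι P},
          (⇑(WittVector.verschiebung : WittVector p R →+ WittVector p R))^[uVal p ι P x.1]
              (η x) ∈
            Set.range
              (⇑(WittVector.verschiebung : WittVector p R →+ WittVector p R))^[m]) := by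
  have hG : IsSMulRegular G p := IsSMulRegular.of_right_eq_zero_of_smul fun g =>
    hTF g p (Fact.out : p.Prime).pos
  exact wittVector_unique_basic_expansion_general p ι hloc P (hloc.injective hG).injOn z
end

section
/- Let p be a prime, R a ℤ_(p)-algebra, r ≥ 0, and A = R[T₁^{±1}, …, T_r^{±1}] the Laurent polynomial ring over R. Fix an admissible choice of total orders on the supports of weights. Then for each n ≥ 0, the p-basic elements ē(k, 𝒫), where (k, 𝒫) runs over all weights k and all partitions 𝒫 = (I_{−∞}, I₀, I₁, …, I_l) of k with l + |I_{−∞}| = n, form a basis of Ω^n_{A/R} as an R-module. -/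
open scoped Classical

set_option synthInstance.maxHeartbeats 1000000
set_option maxHeartbeats 1000000

/-- `T^m`, the canonical basis element of the Laurent polynomial ring
`R[T₁^{±1}, …, T_r^{±1}] = R[ℤ^r]` attached to `m ∈ ℤ^r`. -/
noncomputable def Tpow (R : Type*) [CommRing R] {r : ℕ} (m : Fin r → ℤ) :
    AddMonoidAlgebra R (Fin r → ℤ) :=
  AddMonoidAlgebra.single m 1

/-- `dlog T^m = T^{-m} · d(T^m) ∈ Ω¹_{A/R}` for `A = R[ℤ^r]`. -/
noncomputable def dlogT (R : Type*) [CommRing R] {r : ℕ} (m : Fin r → ℤ) :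
    Ω[AddMonoidAlgebra R (Fin r → ℤ)⁄R] :=
  Tpow R (-m) •
    (KaehlerDifferential.D R (AddMonoidAlgebra R (Fin r → ℤ)) (Tpow R m))

/-- `ord_p` of the value of a weight: `⊥` (i.e. `-∞`) at the symbol `p^{-∞}`
(encoded by `none`), and the `p`-adic valuation at a nonzero integer. -/
def ordWeight (p : ℕ) {r : ℕ} (k : Fin r → Option ℤ) (i : Fin r) : WithBot ℕ :=
  (k i).elim ⊥ fun z => (padicValInt p z : WithBot ℕ)

/-- `k⁺`, replacing the symbol `p^{-∞}` (encoded by `none`) by `0`. -/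
def kplus {r : ℕ} (k : Fin r → Option ℤ) : Fin r → ℤ := fun i => (k i).getD 0

/-- The support `supp k = {i | k_i ≠ 0}` of a weight. -/
def suppW {r : ℕ} (k : Fin r → Option ℤ) : Finset (Fin r) :=
  Finset.univ.filter fun i => k i ≠ some 0

/-- `I_{-∞}(k) = {i | k_i = p^{-∞}}`. -/
def infPart {r : ℕ} (k : Fin r → Option ℤ) : Finset (Fin r) :=
  Finset.univ.filter fun i => k i = none

/-- An admissible choice of total orders on the supports of weights: to each
weight `k` it assigns a relation `le k` which is a total order on `supp k` along
which `ord_p (k_i)` is nondecreasing. -/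
def Admissible (p r : ℕ) (le : (Fin r → Option ℤ) → Fin r → Fin r → Prop) : Prop :=
  ∀ k : Fin r → Option ℤ,
    (∀ i ∈ suppW k, le k i i) ∧
    (∀ i ∈ suppW k, ∀ j ∈ suppW k, le k i j → le k j i → i = j) ∧
    (∀ i ∈ suppW k, ∀ j ∈ suppW k, ∀ l ∈ suppW k, le k i j → le k j l → le k i l) ∧
    (∀ i ∈ suppW k, ∀ j ∈ suppW k, le k i j ∨ le k j i) ∧
    (∀ i ∈ suppW k, ∀ j ∈ suppW k, le k i j → ordWeight p k i ≤ ordWeight p k j)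

/-- A weight `k` together with a partition `𝒫 = (I_{-∞}, I₀, I₁, …, I_l)` of
`supp k` with `l + |I_{-∞}| = n`:  `I 0 = I₀` and `I j = I_j` for `1 ≤ j ≤ l`
are intervals of `supp k ∖ I_{-∞}(k)` (w.r.t. the chosen total order `le k`),
pairwise disjoint, covering `supp k` together with `I_{-∞}(k)`, with
`I₁, …, I_l` nonempty (`I₀` may be empty) and every element of `I_j` strictly
smaller than every element of `I_{j+1}`. -/
structure WeightPartition (p r n : ℕ)
    (le : (Fin r → Option ℤ) → Fin r → Fin r → Prop) where
  k : Fin r → Option ℤ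
  l : ℕ
  I : Fin (l + 1) → Finset (Fin r)
  deg_eq : l + (infPart k).card = n
  subset_supp : ∀ j, I j ⊆ suppW k
  not_inf : ∀ j, ∀ i ∈ I j, k i ≠ none
  interval : ∀ j, ∀ a ∈ I j, ∀ c ∈ I j, ∀ b ∈ suppW k,
    le k a b → le k b c → b ∈ I j
  disj : ∀ j j', j ≠ j' → Disjoint (I j) (I j')
  cover : ∀ i ∈ suppW k, k i = none ∨ ∃ j, i ∈ I j
  nonempty : ∀ j : Fin (l + 1), j ≠ 0 → (I j).Nonempty
  lt_succ : ∀ (j : ℕ) (hj : j + 1 < l + 1), ∀ a ∈ I ⟨j, Nat.lt_of_succ_lt hj⟩,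
    ∀ b ∈ I ⟨j + 1, hj⟩, le k a b ∧ a ≠ b

/-- `ord_p (k_I) = min_{i ∈ I} ord_p (k_i)` for a nonempty
`I ⊆ supp k ∖ I_{-∞}(k)`. -/
noncomputable def ordSet (p : ℕ) {r : ℕ} (k : Fin r → Option ℤ)
    (s : Finset (Fin r)) : ℕ :=
  sInf ((fun i => padicValInt p (kplus k i)) '' (s : Set (Fin r)))

/-- The exponent vector `p^{-ord_p(k_I)} · k_I`. -/
noncomputable def kIdiv (p : ℕ) {r : ℕ} (k : Fin r → Option ℤ)
    (s : Finset (Fin r)) : Fin r → ℤ :=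
  fun i => if i ∈ s then kplus k i / (p : ℤ) ^ ordSet p k s else 0

/-- The `p`-basic element `ē(k, 𝒫)`, as an element of the exterior algebra
`ExteriorAlgebra A (Ω¹_{A/R})` (it lies in the `n`-th exterior power
`⋀[A]^n Ω¹_{A/R}`):
`ē(k,𝒫) = T^{k⁺} · dlog T^{p^{-ord(k_{I₁})} k_{I₁}} ∧ ⋯ ∧
  dlog T^{p^{-ord(k_{I_l})} k_{I_l}} ∧ ⋀_{i ∈ I_{-∞}} dlog T_i`,
the last wedge being taken in increasing order of the index `i`. -/
noncomputable def pBasicElt (p : ℕ) {r n : ℕ} (R : Type*) [CommRing R]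
    {le : (Fin r → Option ℤ) → Fin r → Fin r → Prop}
    (w : WeightPartition p r n le) :
    ExteriorAlgebra (AddMonoidAlgebra R (Fin r → ℤ))
      (Ω[AddMonoidAlgebra R (Fin r → ℤ)⁄R]) :=
  Tpow R (kplus w.k) •
    ExteriorAlgebra.ιMulti (AddMonoidAlgebra R (Fin r → ℤ)) n
      (fun t =>
        Fin.append
          (fun j : Fin w.l => dlogT R (kIdiv p w.k (w.I j.succ)))
          (fun j : Fin (infPart w.k).card =>
            dlogT R (Pi.single
              ((Finset.orderIsoOfFin (infPart w.k) rfl j : {x // x ∈ infPart w.k}) :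
                Fin r) (1 : ℤ)))
          (Fin.cast w.deg_eq.symm t))

/-!
`Ω^n` has the `R`-basis `T^m dlog T_{s₁} ∧ ⋯ ∧ dlog T_{s_n}`, indexed by the pairs `(m, S)` with
`S = {s₁ < ⋯ < s_n}`. In this basis `ē(k, 𝒫)` is a combination of elements with `m = k⁺`, whose
sets `S` consist of `I_{-∞}` and one element of each of `I₁, …, I_l`. The set with the smallest
element of each `I_j` has as coefficient, up to sign, the product of the
`p^{-ord_p(k_{I_j})} k_{min I_j}`. These are prime to `p`, because `ord_p` is nondecreasing along
the order, hence units in `R`. Moreover `(k, 𝒫) ↦ (k⁺, {min I₁, …, min I_l} ∪ I_{-∞})` is a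
bijection: `k` is `p^{-∞}` exactly on the elements of `S` where `m` vanishes, and the other elements
of `S` are the places where the intervals start. So the `ē(k, 𝒫)` are related to the basis by a
triangular matrix with unit diagonal.
-/

section Triangular

variable {ι α R M : Type*} [Preorder α] [CommRing R] [AddCommGroup M] [Module R M]
  (b : Module.Basis ι R M) (ρ : ι → α) {v : ι → M}

lemma repr_apply_of_sub_smul_mem_span {x : M} {u : R} {i j : ι}
    (hx : x - u • b i ∈ Submodule.span R (b '' {l | ρ l < ρ i})) (hj : ¬ρ j < ρ i) :
    b.repr x j = Finsupp.single i u j := by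
  have tail_coord : b.repr (x - u • b i) j = 0 :=
    Finsupp.notMem_support_iff.mp fun h => hj (b.mem_span_image.mp hx h)
  simpa [sub_eq_zero] using tail_coord

lemma linearIndependent_of_triangular
    (hv : ∀ i, ∃ u : Rˣ, v i - (u : R) • b i ∈ Submodule.span R (b '' {j | ρ j < ρ i})) :
    LinearIndependent R v := by
  rw [linearIndependent_iff]
  intro c hc
  by_contra hne
  obtain ⟨i, hi, hmax⟩ :=
    c.support.exists_maximalFor ρ (Finsupp.support_nonempty_iff.mpr hne)
  obtain ⟨u, hu⟩ := hv i
  have off_diagonal : ∀ j ∈ c.support, j ≠ i → c j • b.repr (v j) i = 0 := fun j hj hji => by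
    obtain ⟨u', hu'⟩ := hv j
    rw [repr_apply_of_sub_smul_mem_span b ρ hu' fun hlt => hlt.not_ge (hmax hj hlt.le),
      Finsupp.single_eq_of_ne hji.symm, smul_zero]
  have diagonal : c i * u = 0 := by
    have := congrArg (fun x => b.repr x i) hc
    simp only [Finsupp.linearCombination_apply, Finsupp.sum, map_sum, map_smul, map_zero,
      Finsupp.coe_finsetSum, Finset.sum_apply, Finsupp.smul_apply, Finsupp.zero_apply] at this
    rwa [Finset.sum_eq_single_of_mem i hi off_diagonal,
      repr_apply_of_sub_smul_mem_span b ρ hu (lt_irrefl _), Finsupp.single_eq_same] at this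
  exact Finsupp.mem_support_iff.mp hi (u.mul_left_eq_zero.mp diagonal)

lemma span_eq_top_of_triangular [WellFoundedLT α]
    (hv : ∀ i, ∃ u : Rˣ, v i - (u : R) • b i ∈ Submodule.span R (b '' {j | ρ j < ρ i})) :
    Submodule.span R (Set.range v) = ⊤ := by
  suffices basis_mem : ∀ i, b i ∈ Submodule.span R (Set.range v) by
    rw [eq_top_iff, ← b.span_eq, Submodule.span_le]
    exact Set.range_subset_iff.mpr basis_mem
  intro i
  induction i using (InvImage.wf ρ wellFounded_lt).induction with
  | _ i ih =>
    obtain ⟨u, hu⟩ := hv i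
    have tail_mem : v i - (u : R) • b i ∈ Submodule.span R (Set.range v) :=
      Submodule.span_le.mpr (Set.image_subset_iff.mpr ih) hu
    have leading_mem : (u : R) • b i ∈ Submodule.span R (Set.range v) := by
      simpa using sub_mem (Submodule.subset_span (Set.mem_range_self i)) tail_mem
    exact ((Submodule.span R (Set.range v)).smul_mem_iff_of_isUnit u.isUnit).mp leading_mem

lemma existsUnique_finsuppSum (x : M) : ∃! c : ι →₀ R, x = c.sum fun i a => a • b i := by
  refine ⟨b.repr x, (b.linearCombination_repr x).symm, fun c hc => ?_⟩
  rw [hc, ← Finsupp.linearCombination_apply, b.repr_linearCombination]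

end Triangular

lemma isUnit_intCast_of_not_dvd {R : Type*} [CommRing R] {p : ℕ}
    (hR : ∀ q : ℕ, q.Prime → q ≠ p → IsUnit (q : R)) {z : ℤ} (hz : ¬(p : ℤ) ∣ z) :
    IsUnit (z : R) := by
  have isUnit_natCast : ∀ n : ℕ, ¬p ∣ n → IsUnit (n : R) := by
    intro n
    induction n using Nat.recOnMul with
    | zero => exact fun h => absurd (dvd_zero p) h
    | one => simp
    | prime q hq => exact fun h => hR q hq fun hqp => h hqp.symm.dvd
    | mul a b ha hb =>
      intro h
      rw [Nat.cast_mul]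
      exact (ha fun h' => h (h'.mul_right b)).mul (hb fun h' => h (h'.mul_left a))
  have := isUnit_natCast z.natAbs (by rwa [Int.natCast_dvd] at hz)
  obtain h | h := Int.natAbs_eq z <;> rw [h] <;> simpa

lemma not_dvd_ediv_pow_padicValInt {p : ℕ} (hp : p ≠ 1) {z : ℤ} (hz : z ≠ 0) :
    ¬(p : ℤ) ∣ z / (p : ℤ) ^ padicValInt p z := by
  intro h
  have pow_succ_dvd : (p : ℤ) ^ (padicValInt p z + 1) ∣ z := by
    rw [pow_succ, ← Int.mul_ediv_cancel' (padicValInt_dvd (p := p) z)]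
    exact mul_dvd_mul (by rw [Int.mul_ediv_cancel' (padicValInt_dvd z)]) h
  rw [padicValInt_dvd_iff_of_ne_one hp] at pow_succ_dvd
  lia

section LaurentForms

section EulerDerivation

variable {R G : Type*} [CommRing R] [AddCommMonoid G]

/-- The `R`-linear endomorphism of `R[G]` scaling `T^m` by `φ m`. -/
noncomputable def eulerLinearMap (φ : G →+ R) : AddMonoidAlgebra R G →ₗ[R] AddMonoidAlgebra R G :=
  (AddMonoidAlgebra.basis G R).constr R fun m => φ m • AddMonoidAlgebra.single m 1

lemma eulerLinearMap_single (φ : G →+ R) (m : G) (a : R) :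
    eulerLinearMap φ (AddMonoidAlgebra.single m a) = φ m • AddMonoidAlgebra.single m a := by
  have basis_smul : AddMonoidAlgebra.single m a = a • AddMonoidAlgebra.basis G R m := by simp
  rw [basis_smul, map_smul, eulerLinearMap, Module.Basis.constr_basis,
    AddMonoidAlgebra.basis_apply, smul_comm]

/-- The derivation of `R[G]` scaling `T^m` by `φ m`. For `G = ℤ^r` and `φ` the `i`-th coordinate
this is `T_i ∂/∂T_i`. -/
noncomputable def eulerDerivation (φ : G →+ R) :
    Derivation R (AddMonoidAlgebra R G) (AddMonoidAlgebra R G) :=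
  Derivation.mk' (eulerLinearMap φ) fun a b => by
    induction a using AddMonoidAlgebra.induction_linear with
    | zero => simp
    | add a a' ha ha' => simp only [add_mul, map_add, ha, ha', add_smul, smul_add]; abel
    | single m x =>
      induction b using AddMonoidAlgebra.induction_linear with
      | zero => simp
      | add b b' hb hb' => simp only [mul_add, map_add, hb, hb', add_smul, smul_add]; abel
      | single m' y =>
        simp only [AddMonoidAlgebra.single_mul_single, eulerLinearMap_single, smul_eq_mul,
          mul_smul_comm, map_add, add_smul]
        rw [add_comm, add_comm m' m, mul_comm y x]

end EulerDerivation

variable (R : Type*) [CommRing R] {r : ℕ}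

lemma Tpow_mul (m m' : Fin r → ℤ) : Tpow R m * Tpow R m' = Tpow R (m + m') := by
  simp [Tpow, AddMonoidAlgebra.single_mul_single]

lemma Tpow_zero : Tpow R (0 : Fin r → ℤ) = 1 := rfl

lemma dlogT_add (m m' : Fin r → ℤ) : dlogT R (m + m') = dlogT R m + dlogT R m' := by
  simp only [dlogT, ← Tpow_mul R m m', Derivation.leibniz, smul_add, smul_smul]
  rw [Tpow_mul, Tpow_mul, add_comm]
  congr 3 <;> abel

lemma dlogT_eq_sum (m : Fin r → ℤ) : dlogT R m = ∑ i, m i • dlogT R (Pi.single i 1) := by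
  let dlogHom := AddMonoidHom.mk' (dlogT R (r := r)) (dlogT_add R)
  change dlogHom m = ∑ i, m i • dlogHom (Pi.single i 1)
  simp only [← map_zsmul, ← map_sum]
  congr 1
  exact pi_eq_sum_univ' m

lemma D_Tpow (m : Fin r → ℤ) :
    KaehlerDifferential.D R (AddMonoidAlgebra R (Fin r → ℤ)) (Tpow R m) =
      Tpow R m • dlogT R m := by
  rw [dlogT, smul_smul, Tpow_mul, add_neg_cancel, Tpow_zero, one_smul]

lemma liftKaehlerDifferential_eulerDerivation_dlogT (φ : (Fin r → ℤ) →+ R) (m : Fin r → ℤ) :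
    (eulerDerivation φ).liftKaehlerDifferential (dlogT R m) = algebraMap R _ (φ m) := by
  have euler_Tpow : eulerDerivation φ (Tpow R m) = φ m • Tpow R m := eulerLinearMap_single φ m 1
  rw [dlogT, map_smul, Derivation.liftKaehlerDifferential_comp_D, euler_Tpow, smul_eq_mul,
    mul_smul_comm, Tpow_mul, neg_add_cancel, Tpow_zero, Algebra.algebraMap_eq_smul_one]

lemma linearIndependent_dlogT :
    LinearIndependent (AddMonoidAlgebra R (Fin r → ℤ))
      fun i : Fin r => dlogT R (Pi.single i 1) := by
  let coordinate (i : Fin r) : (Fin r → ℤ) →+ R :=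
    (Int.castAddHom R).comp (Pi.evalAddMonoidHom (fun _ => ℤ) i)
  refine .of_pairwise_dual_eq_zero_one _
    (fun i => (eulerDerivation (coordinate i)).liftKaehlerDifferential) ?_ ?_
  · intro i j hij
    rw [liftKaehlerDifferential_eulerDerivation_dlogT]
    simp [coordinate, hij]
  · intro i
    rw [liftKaehlerDifferential_eulerDerivation_dlogT]
    simp [coordinate, AddMonoidAlgebra.one_def]

lemma span_dlogT_eq_top :
    Submodule.span (AddMonoidAlgebra R (Fin r → ℤ))
      (Set.range fun i : Fin r => dlogT R (Pi.single i 1)) = ⊤ := by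
  rw [eq_top_iff, ← KaehlerDifferential.span_range_derivation, Submodule.span_le]
  rintro _ ⟨a, rfl⟩
  induction a using AddMonoidAlgebra.induction_linear with
  | zero => simp
  | add a b ha hb => rw [map_add]; exact add_mem ha hb
  | single m x =>
    have single_eq_smul : AddMonoidAlgebra.single m x = x • Tpow R m := by simp [Tpow]
    rw [single_eq_smul, Derivation.map_smul, D_Tpow, dlogT_eq_sum]
    refine Submodule.smul_of_tower_mem _ x (Submodule.smul_mem _ _ (sum_mem fun i _ => ?_))
    exact zsmul_mem (Submodule.subset_span (Set.mem_range_self i)) (m i)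

/-- The basis `dlog T₁, …, dlog T_r` of `Ω¹` over the Laurent polynomial ring. -/
noncomputable def dlogBasis :
    Module.Basis (Fin r) (AddMonoidAlgebra R (Fin r → ℤ)) Ω[AddMonoidAlgebra R (Fin r → ℤ)⁄R] :=
  .mk (linearIndependent_dlogT R) (span_dlogT_eq_top R).ge

lemma dlogBasis_apply (i : Fin r) : dlogBasis R i = dlogT R (Pi.single i 1) := by
  simp [dlogBasis]

/-- The basis `T^m · dlog T_{s₁} ∧ ⋯ ∧ dlog T_{s_n}` of `Ω^n` over `R`, indexed by the exponents
`m` and the `n`-element sets `{s₁ < ⋯ < s_n}`. -/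
noncomputable def logFormBasis (n : ℕ) :
    Module.Basis ((Fin r → ℤ) × Set.powersetCard (Fin r) n) R
      (⋀[AddMonoidAlgebra R (Fin r → ℤ)]^n Ω[AddMonoidAlgebra R (Fin r → ℤ)⁄R]) :=
  (AddMonoidAlgebra.basis (Fin r → ℤ) R).smulTower ((dlogBasis R).exteriorPower n)

lemma logFormBasis_apply {n : ℕ} (m : Fin r → ℤ) (S : Set.powersetCard (Fin r) n) :
    logFormBasis R n (m, S) = Tpow R m • (dlogBasis R).exteriorPower n S :=
  Module.Basis.smulTower_apply _ _ _

end LaurentForms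

section ExteriorExpansion

variable {R A M I : Type*} [CommRing R] [CommRing A] [Algebra R A] [AddCommGroup M] [Module A M]
  [LinearOrder I] (b : Module.Basis I A M) {n : ℕ}

lemma ιMulti_comp_embedding (f : Fin n ↪ I) :
    ∃ ε : ℤˣ, exteriorPower.ιMulti A n (b ∘ f) =
      ε • b.exteriorPower n (Set.powersetCard.ofFinEmb n I f) := by
  set S := Set.powersetCard.ofFinEmb n I f
  have mem_range : ∀ t, f t ∈ Set.range (Set.powersetCard.ofFinEmbEquiv.symm S) := fun t =>
    (Set.powersetCard.mem_range_ofFinEmbEquiv_symm_iff_mem S (f t)).mpr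
      ((Set.powersetCard.mem_ofFinEmb_iff_mem_range n I f (f t)).mpr ⟨t, rfl⟩)
  choose σ hσ using mem_range
  have σ_injective : Function.Injective σ := fun a c h => f.injective (by rw [← hσ, ← hσ, h])
  let τ : Equiv.Perm (Fin n) := .ofBijective σ (Finite.injective_iff_bijective.mp σ_injective)
  refine ⟨Equiv.Perm.sign τ, ?_⟩
  rw [exteriorPower.basis_apply, exteriorPower.ιMulti_family, ← AlternatingMap.map_perm]
  exact congrArg _ (funext fun t => congrArg b (hσ t).symm)

variable [Module R M] [IsScalarTower R A M]

lemma ιMulti_sum_smul {J N : Type*} [AddCommGroup N] [Module A N] [Module R N]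
    [IsScalarTower R A N] (e : J → N) (G : Fin n → Finset J) (c : Fin n → J → R) :
    exteriorPower.ιMulti A n (fun t => ∑ i ∈ G t, c t i • e i) =
      ∑ f ∈ Fintype.piFinset G, (∏ t, c t (f t)) • exteriorPower.ιMulti A n (e ∘ f) := by
  let g := (exteriorPower.ιMulti A n (M := N)).toMultilinearMap.restrictScalars R
  exact (g.map_sum_finset _ G).trans (Finset.sum_congr rfl fun f _ => g.map_smul_univ _ _)

lemma ιMulti_sub_leading_mem_span {G : Fin n → Finset I} (hG : Pairwise (Function.onFun Disjoint G))
    (c : Fin n → I → R) (f₀ : Fin n ↪ I) (hf₀ : ∀ t, f₀ t ∈ G t) :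
    ∃ ε : ℤˣ, exteriorPower.ιMulti A n (fun t => ∑ i ∈ G t, c t i • b i) -
        ((ε : ℤ) * ∏ t, c t (f₀ t)) • b.exteriorPower n (Set.powersetCard.ofFinEmb n I f₀) ∈
      Submodule.span R (b.exteriorPower n '' (Set.powersetCard.ofFinEmb n I ''
        {f | (∀ t, f t ∈ G t) ∧ f ≠ f₀})) := by
  obtain ⟨ε, hε⟩ := ιMulti_comp_embedding b f₀
  refine ⟨ε, ?_⟩
  rw [ιMulti_sum_smul, ← Finset.add_sum_erase _ _ (Fintype.mem_piFinset.mpr hf₀)]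
  have leading_term : (∏ t, c t (f₀ t)) • exteriorPower.ιMulti A n (b ∘ f₀) =
      ((ε : ℤ) * ∏ t, c t (f₀ t)) • b.exteriorPower n (Set.powersetCard.ofFinEmb n I f₀) := by
    rw [hε, Units.smul_def, ← Int.cast_smul_eq_zsmul R, smul_smul, mul_comm]
  rw [leading_term, add_sub_cancel_left]
  refine sum_mem fun f hf => Submodule.smul_mem _ _ ?_
  obtain ⟨hne, hf⟩ := Finset.mem_erase.mp hf
  have hf := Fintype.mem_piFinset.mp hf
  have f_injective : Function.Injective f := fun t t' h => hG.eq
    (Finset.not_disjoint_iff.mpr ⟨f t, hf t, h ▸ hf t'⟩)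
  obtain ⟨ε', hε'⟩ := ιMulti_comp_embedding b ⟨f, f_injective⟩
  change exteriorPower.ιMulti A n (b ∘ f) = _ at hε'
  rw [hε', Units.smul_def]
  refine zsmul_mem (Submodule.subset_span (Set.mem_image_of_mem _ (Set.mem_image_of_mem _ ?_))) _
  exact ⟨hf, fun h => hne (congrArg DFunLike.coe h)⟩

end ExteriorExpansion

section Counting

variable {α β : Type*} [Preorder β] [DecidableLE β] {ν : α → β} {S : Finset α}

/-- The number of elements of `S` that are at most `a` for the ordering by `ν`. If `S` consists of
the smallest elements of consecutive intervals, this is the index of the interval containing `a`. -/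
def countLE (ν : α → β) (S : Finset α) (a : α) : ℕ :=
  (S.filter fun s => ν s ≤ ν a).card

lemma countLE_le_card (a : α) : countLE ν S a ≤ S.card :=
  Finset.card_filter_le _ _

lemma countLE_mono {a b : α} (h : ν a ≤ ν b) : countLE ν S a ≤ countLE ν S b :=
  Finset.card_le_card (Finset.monotone_filter_right S fun _ _ hs => hs.trans h)

lemma countLE_lt {a b : α} (hb : b ∈ S) (h : ν a < ν b) : countLE ν S a < countLE ν S b := by
  refine Finset.card_lt_card (Finset.ssubset_iff_of_subset ?_ |>.mpr ⟨b, ?_, ?_⟩)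
  · exact Finset.monotone_filter_right S fun _ _ hs => hs.trans h.le
  · exact Finset.mem_filter.mpr ⟨hb, le_rfl⟩
  · exact fun hba => (Finset.mem_filter.mp hba).2.not_gt h

lemma countLE_pos {a : α} (ha : a ∈ S) : 0 < countLE ν S a :=
  Finset.card_pos.mpr ⟨a, Finset.mem_filter.mpr ⟨ha, le_rfl⟩⟩

lemma countLE_injOn {β : Type*} [LinearOrder β] {ν : α → β} (hν : Set.InjOn ν S) :
    Set.InjOn (countLE ν S) S := by
  intro a ha b hb hab
  refine hν ha hb (le_antisymm ?_ ?_) <;> by_contra! h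
  · exact (countLE_lt ha h).ne' hab
  · exact (countLE_lt hb h).ne hab

lemma image_countLE {β : Type*} [LinearOrder β] {ν : α → β} (hν : Set.InjOn ν S) :
    S.image (countLE ν S) = Finset.Icc 1 S.card := by
  refine Finset.eq_of_subset_of_card_le (Finset.image_subset_iff.mpr fun a ha => ?_) ?_
  · exact Finset.mem_Icc.mpr ⟨countLE_pos ha, countLE_le_card a⟩
  · rw [Finset.card_image_of_injOn (countLE_injOn hν), Nat.card_Icc, Nat.add_sub_cancel]

end Counting

section Weights

variable {p r : ℕ} {le : (Fin r → Option ℤ) → Fin r → Fin r → Prop} {k : Fin r → Option ℤ}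
  {i j : Fin r}

lemma mem_suppW : i ∈ suppW k ↔ k i ≠ some 0 := by
  simp [suppW]

lemma mem_infPart : i ∈ infPart k ↔ k i = none := by
  simp [infPart]

lemma kplus_ne_zero_iff : kplus k i ≠ 0 ↔ i ∈ suppW k ∧ k i ≠ none := by
  rw [mem_suppW, kplus]
  cases k i <;> simp

/-- The position of `i`, counted from `1`, in the order `le k` on `supp k`. -/
noncomputable def suppRank (le : (Fin r → Option ℤ) → Fin r → Fin r → Prop)
    (k : Fin r → Option ℤ) (i : Fin r) : ℕ :=
  ((suppW k).filter fun j => le k j i).card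

lemma suppRank_le : suppRank le k i ≤ r :=
  (Finset.card_le_univ _).trans_eq (Fintype.card_fin r)

lemma suppRank_le_suppRank (hle : Admissible p r le) (hi : i ∈ suppW k) (hj : j ∈ suppW k) :
    suppRank le k i ≤ suppRank le k j ↔ le k i j := by
  obtain ⟨hrefl, -, htrans, htotal, -⟩ := hle k
  have filter_subset : ∀ {i j}, i ∈ suppW k → j ∈ suppW k → le k i j →
      (suppW k).filter (le k · i) ⊆ (suppW k).filter (le k · j) := fun hi hj hij =>
    Finset.monotone_filter_right _ fun l hl hli => htrans l hl _ hi _ hj hli hij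
  refine ⟨fun h => ?_, fun h => Finset.card_le_card (filter_subset hi hj h)⟩
  obtain hij | hji := htotal i hi j hj
  · exact hij
  · have filters_eq := Finset.eq_of_subset_of_card_le (filter_subset hj hi hji) h
    have i_mem : i ∈ (suppW k).filter (le k · i) := Finset.mem_filter.mpr ⟨hi, hrefl i hi⟩
    rw [← filters_eq] at i_mem
    exact (Finset.mem_filter.mp i_mem).2

lemma suppRank_injOn (hle : Admissible p r le) : Set.InjOn (suppRank le k) (suppW k) :=
  fun i hi j hj h => (hle k).2.1 i hi j hj
    ((suppRank_le_suppRank hle hi hj).mp h.le) ((suppRank_le_suppRank hle hj hi).mp h.ge)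

lemma ordWeight_le_of_suppRank_le (hle : Admissible p r le) (hi : i ∈ suppW k) (hj : j ∈ suppW k)
    (h : suppRank le k i ≤ suppRank le k j) : ordWeight p k i ≤ ordWeight p k j :=
  (hle k).2.2.2.2 i hi j hj ((suppRank_le_suppRank hle hi hj).mp h)

lemma kplus_ne_zero_of_suppRank_le (hle : Admissible p r le) (hi : kplus k i ≠ 0)
    (hj : j ∈ suppW k) (h : suppRank le k i ≤ suppRank le k j) : kplus k j ≠ 0 := by
  obtain ⟨i_supp, i_ne_none⟩ := kplus_ne_zero_iff.mp hi
  refine kplus_ne_zero_iff.mpr ⟨hj, fun j_none => ?_⟩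
  obtain ⟨z, hz⟩ := Option.ne_none_iff_exists'.mp i_ne_none
  simpa [ordWeight, j_none, hz] using ordWeight_le_of_suppRank_le hle i_supp hj h

/-- The weight with integral values `m`, except that it takes the value `p^{-∞}` on the elements
of `S` where `m` vanishes. -/
noncomputable def weightOf (m : Fin r → ℤ) (S : Finset (Fin r)) : Fin r → Option ℤ :=
  fun i => if m i = 0 ∧ i ∈ S then none else some (m i)

variable {m : Fin r → ℤ} {S : Finset (Fin r)}

lemma weightOf_eq_none_iff : weightOf m S i = none ↔ m i = 0 ∧ i ∈ S := by
  simp [weightOf]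

lemma mem_suppW_weightOf : i ∈ suppW (weightOf m S) ↔ m i ≠ 0 ∨ i ∈ S := by
  rw [mem_suppW, weightOf]
  grind

lemma kplus_weightOf : kplus (weightOf m S) = m := by
  funext i
  rw [kplus, weightOf]
  split_ifs with h
  · exact h.1.symm
  · rfl

lemma weightOf_kplus (hinf : infPart k ⊆ S) (hsupp : S ⊆ suppW k) :
    weightOf (kplus k) S = k := by
  funext i
  rw [weightOf, kplus]
  cases hi : k i with
  | none => exact if_pos ⟨rfl, hinf (mem_infPart.mpr hi)⟩
  | some z =>
    refine if_neg fun ⟨z_zero, i_mem⟩ => mem_suppW.mp (hsupp i_mem) (hi.trans ?_)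
    exact congrArg some z_zero

/-- The index `j` of the interval `I_j` containing `i`, in the partition of `weightOf m S` whose
intervals start at the elements of `S` where `m` does not vanish. -/
noncomputable def blockIndex (le : (Fin r → Option ℤ) → Fin r → Fin r → Prop) (m : Fin r → ℤ)
    (S : Finset (Fin r)) : Fin r → ℕ :=
  countLE (suppRank le (weightOf m S)) (S.filter fun s => m s ≠ 0)

lemma suppRank_weightOf_injOn (hle : Admissible p r le) :
    Set.InjOn (suppRank le (weightOf m S)) (S.filter fun s => m s ≠ 0) :=
  (suppRank_injOn hle).mono fun _ hs =>
    mem_suppW_weightOf.mpr (Or.inr (Finset.mem_of_mem_filter _ hs))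

end Weights

namespace WeightPartition

section Leads

variable {p r n : ℕ} {le : (Fin r → Option ℤ) → Fin r → Fin r → Prop}
  (w : WeightPartition p r n le)

/-- The smallest element of `I_{j+1}`. -/
noncomputable def start (j : Fin w.l) : Fin r :=
  (Finset.exists_min_image _ (suppRank le w.k) (w.nonempty _ (Fin.succ_ne_zero j))).choose

lemma start_mem (j : Fin w.l) : w.start j ∈ w.I j.succ :=
  (Finset.exists_min_image _ _ (w.nonempty _ (Fin.succ_ne_zero j))).choose_spec.1

lemma suppRank_start_le {j : Fin w.l} {i : Fin r} (hi : i ∈ w.I j.succ) :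
    suppRank le w.k (w.start j) ≤ suppRank le w.k i :=
  (Finset.exists_min_image _ _ (w.nonempty _ (Fin.succ_ne_zero j))).choose_spec.2 i hi

lemma start_injective : Function.Injective w.start := fun j j' h => by
  by_contra hne
  exact Finset.disjoint_left.mp (w.disj j.succ j'.succ fun h' => hne (Fin.succ_injective _ h'))
    (w.start_mem j) (h ▸ w.start_mem j')

lemma kplus_ne_zero_of_mem {j : Fin (w.l + 1)} {i : Fin r} (hi : i ∈ w.I j) : kplus w.k i ≠ 0 :=
  kplus_ne_zero_iff.mpr ⟨w.subset_supp j hi, w.not_inf j i hi⟩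

/-- The position in the wedge product `ē(k, 𝒫)` of the factor attached to an interval `I_{j+1}` or
to an element of `I_{-∞}`. -/
noncomputable def slot : Fin w.l ⊕ infPart w.k ≃ Fin n :=
  ((Equiv.refl _).sumCongr ((infPart w.k).orderIsoOfFin rfl).symm.toEquiv).trans
    (finSumFinEquiv.trans (finCongr w.deg_eq))

/-- The set of indices occurring in the `t`-th factor of `ē(k, 𝒫)`. -/
noncomputable def block (t : Fin n) : Finset (Fin r) :=
  Sum.elim (fun j => w.I j.succ) (fun i => {i.1}) (w.slot.symm t)

/-- The smallest index occurring in the `t`-th factor of `ē(k, 𝒫)`. -/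
noncomputable def lead : Fin n ↪ Fin r where
  toFun t := Sum.elim w.start (fun i => i.1) (w.slot.symm t)
  inj' := by
    refine (w.start_injective.sumElim Subtype.val_injective fun j i h => ?_).comp
      w.slot.symm.injective
    exact w.not_inf _ _ (w.start_mem j) (h ▸ mem_infPart.mp i.2)

lemma block_slot (s : Fin w.l ⊕ infPart w.k) :
    w.block (w.slot s) = Sum.elim (fun j => w.I j.succ) (fun i => {i.1}) s := by
  simp [block]

lemma lead_slot (s : Fin w.l ⊕ infPart w.k) :
    w.lead (w.slot s) = Sum.elim w.start (fun i => i.1) s := by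
  simp [lead]

lemma lead_mem_block (t : Fin n) : w.lead t ∈ w.block t := by
  obtain ⟨j | i, rfl⟩ := w.slot.surjective t <;> rw [lead_slot, block_slot]
  · exact w.start_mem j
  · exact Finset.mem_singleton_self i.1

lemma suppRank_lead_le {t : Fin n} {i : Fin r} (hi : i ∈ w.block t) :
    suppRank le w.k (w.lead t) ≤ suppRank le w.k i := by
  obtain ⟨j | i', rfl⟩ := w.slot.surjective t <;> rw [block_slot] at hi <;> rw [lead_slot]
  · exact w.suppRank_start_le hi
  · rw [Finset.mem_singleton.mp hi, Sum.elim_inr]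

lemma block_subset_suppW (t : Fin n) : w.block t ⊆ suppW w.k := by
  obtain ⟨j | i, rfl⟩ := w.slot.surjective t <;> rw [block_slot]
  · exact w.subset_supp _
  · refine Finset.singleton_subset_iff.mpr (mem_suppW.mpr ?_)
    simp [mem_infPart.mp i.2]

lemma pairwise_disjoint_block : Pairwise (Function.onFun Disjoint w.block) := by
  suffices Pairwise (Function.onFun Disjoint
      (Sum.elim (fun j : Fin w.l => w.I j.succ) fun i : infPart w.k => {i.1})) from
    this.comp_of_injective w.slot.symm.injective
  rintro (j | i) (j' | i') hne
  · exact w.disj _ _ fun h => hne (congrArg Sum.inl (Fin.succ_injective _ h))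
  · exact Finset.disjoint_singleton_right.mpr fun h => w.not_inf _ _ h (mem_infPart.mp i'.2)
  · exact Finset.disjoint_singleton_left.mpr fun h => w.not_inf _ _ h (mem_infPart.mp i.2)
  · exact Finset.disjoint_singleton.mpr fun h => hne (congrArg Sum.inr (Subtype.ext h))

lemma weightOf_kplus_ofFinEmb {f : Fin n ↪ Fin r} (hf : ∀ t, f t ∈ w.block t) :
    weightOf (kplus w.k) (Set.powersetCard.ofFinEmb n (Fin r) f) = w.k := by
  refine weightOf_kplus (fun i hi => ?_) (fun i hi => ?_)
  · refine (Set.powersetCard.mem_ofFinEmb_iff_mem_range n _ f i).mpr ⟨w.slot (.inr ⟨i, hi⟩), ?_⟩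
    simpa [block_slot] using hf (w.slot (.inr ⟨i, hi⟩))
  · obtain ⟨t, rfl⟩ := (Set.powersetCard.mem_ofFinEmb_iff_mem_range n _ f i).mp hi
    exact w.block_subset_suppW t (hf t)

/-- The set `{min I₁, …, min I_l} ∪ I_{-∞}`. -/
noncomputable def leads : Set.powersetCard (Fin r) n :=
  Set.powersetCard.ofFinEmb n (Fin r) w.lead

lemma mem_leads {i : Fin r} :
    i ∈ (w.leads : Finset (Fin r)) ↔ (∃ j, w.start j = i) ∨ i ∈ infPart w.k := by
  refine (Set.powersetCard.mem_ofFinEmb_iff_mem_range n _ w.lead i).trans ?_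
  simp [Set.mem_range, w.slot.surjective.exists, lead_slot]

lemma weightOf_kplus_leads : weightOf (kplus w.k) w.leads = w.k :=
  w.weightOf_kplus_ofFinEmb w.lead_mem_block

lemma filter_leads_kplus_ne_zero :
    (w.leads : Finset (Fin r)).filter (fun i => kplus w.k i ≠ 0) = Finset.univ.image w.start := by
  ext i
  rw [Finset.mem_filter, mem_leads, Finset.mem_image]
  simp only [Finset.mem_univ, true_and]
  refine ⟨fun ⟨h, hi⟩ => h.resolve_right fun h' => ?_, fun h => ⟨.inl h, ?_⟩⟩
  · exact (kplus_ne_zero_iff.mp hi).2 (mem_infPart.mp h')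
  · obtain ⟨j, rfl⟩ := h
    exact w.kplus_ne_zero_of_mem (w.start_mem j)

end Leads

section Bijection

variable {p r n : ℕ} {le : (Fin r → Option ℤ) → Fin r → Fin r → Prop}

lemma suppRank_lt_of_mem (hle : Admissible p r le) (w : WeightPartition p r n le)
    {a b : Fin (w.l + 1)} (hab : a < b) {x y : Fin r} (hx : x ∈ w.I a) (hy : y ∈ w.I b) :
    suppRank le w.k x < suppRank le w.k y := by
  induction b using Fin.induction generalizing y with
  | zero => exact absurd hab (Fin.not_lt_zero a)
  | succ b ih =>
    have lt_of_mem_castSucc : ∀ z ∈ w.I b.castSucc, suppRank le w.k z < suppRank le w.k y := by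
      intro z hz
      obtain ⟨z_le, z_ne⟩ := w.lt_succ b b.succ.isLt z hz y hy
      have z_supp := w.subset_supp _ hz
      have y_supp := w.subset_supp _ hy
      exact ((suppRank_le_suppRank hle z_supp y_supp).mpr z_le).lt_of_ne
        fun h => z_ne (suppRank_injOn hle z_supp y_supp h)
    obtain rfl | hab' := (Fin.le_castSucc_iff.mpr hab).eq_or_lt
    · exact lt_of_mem_castSucc x hx
    · obtain ⟨z, hz⟩ := w.nonempty _ (Fin.ne_zero_of_lt hab')
      exact (ih hab' hz).trans (lt_of_mem_castSucc z hz)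

lemma suppRank_start_le_iff (hle : Admissible p r le) (w : WeightPartition p r n le)
    {a : Fin w.l} {j : Fin (w.l + 1)} {i : Fin r} (hi : i ∈ w.I j) :
    suppRank le w.k (w.start a) ≤ suppRank le w.k i ↔ a.val < j.val := by
  refine ⟨fun h => ?_, fun h => ?_⟩
  · by_contra! hja
    exact h.not_gt (w.suppRank_lt_of_mem hle (Fin.lt_def.mpr (Nat.lt_succ_of_le hja)) hi
      (w.start_mem a))
  · obtain rfl | haj := (Fin.le_def.mpr h : a.succ ≤ j).eq_or_lt
    · exact w.suppRank_start_le hi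
    · exact (w.suppRank_lt_of_mem hle haj (w.start_mem a) hi).le

lemma blockIndex_leads (hle : Admissible p r le) (w : WeightPartition p r n le)
    {j : Fin (w.l + 1)} {i : Fin r} (hi : i ∈ w.I j) :
    blockIndex le (kplus w.k) w.leads i = j := by
  rw [blockIndex, weightOf_kplus_leads, filter_leads_kplus_ne_zero, countLE, Finset.filter_image,
    Finset.card_image_of_injective _ w.start_injective]
  simp only [w.suppRank_start_le_iff hle hi, Fin.card_filter_val_lt]
  exact min_eq_right (Nat.le_of_lt_succ j.isLt)

lemma mem_I_iff (hle : Admissible p r le) (w : WeightPartition p r n le) {j : Fin (w.l + 1)}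
    {i : Fin r} :
    i ∈ w.I j ↔ kplus w.k i ≠ 0 ∧ blockIndex le (kplus w.k) w.leads i = j := by
  refine ⟨fun hi => ⟨w.kplus_ne_zero_of_mem hi, w.blockIndex_leads hle hi⟩, fun ⟨hi, hj⟩ => ?_⟩
  obtain ⟨i_supp, i_ne_none⟩ := kplus_ne_zero_iff.mp hi
  obtain ⟨j', hj'⟩ := (w.cover i i_supp).resolve_left i_ne_none
  rwa [← Fin.ext ((w.blockIndex_leads hle hj').symm.trans hj)]

lemma ext_of_leads (hle : Admissible p r le) {w w' : WeightPartition p r n le}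
    (hm : kplus w.k = kplus w'.k) (hS : w.leads = w'.leads) : w = w' := by
  have hk : w.k = w'.k := by
    rw [← weightOf_kplus_leads w, ← weightOf_kplus_leads w', hm, hS]
  have hl : w.l = w'.l := by
    have := w.deg_eq.trans w'.deg_eq.symm
    rwa [hk, Nat.add_right_cancel_iff] at this
  have hI : ∀ j, w.I j = w'.I (Fin.cast (congrArg (· + 1) hl) j) := fun j => by
    ext i
    rw [w.mem_I_iff hle, w'.mem_I_iff hle, hm, hS, Fin.val_cast]
  obtain ⟨k, l, I, _, _, _, _, _, _, _, _⟩ := w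
  obtain ⟨k', l', I', _, _, _, _, _, _, _, _⟩ := w'
  obtain rfl : k = k' := hk
  obtain rfl : l = l' := hl
  obtain rfl : I = I' := funext hI
  rfl

variable (m : Fin r → ℤ) (S : Set.powersetCard (Fin r) n)

lemma blockIndex_le_card (i : Fin r) :
    blockIndex le m S i ≤ (S.1.filter fun s => m s ≠ 0).card :=
  countLE_le_card i

lemma exists_blockIndex_eq (hle : Admissible p r le) {j : ℕ} (hj : j ≠ 0)
    (hj' : j ≤ (S.1.filter fun s => m s ≠ 0).card) :
    ∃ i, m i ≠ 0 ∧ blockIndex le m S i = j := by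
  have j_mem := Finset.mem_Icc.mpr ⟨Nat.one_le_iff_ne_zero.mpr hj, hj'⟩
  rw [← image_countLE (suppRank_weightOf_injOn hle), Finset.mem_image] at j_mem
  obtain ⟨i, hi, rfl⟩ := j_mem
  exact ⟨i, (Finset.mem_filter.mp hi).2, rfl⟩

lemma card_filter_add_card_infPart_weightOf :
    (S.1.filter fun s => m s ≠ 0).card + (infPart (weightOf m S)).card = n := by
  have infPart_eq : infPart (weightOf m S) = S.1.filter fun s => ¬m s ≠ 0 := by
    ext i
    rw [mem_infPart, weightOf_eq_none_iff, Finset.mem_filter, not_not, and_comm]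
  rw [infPart_eq, Finset.card_filter_add_card_filter_not, S.2]

/-- The partition of `weightOf m S` whose intervals `I₁, …, I_l` start at the elements of `S` where
`m` does not vanish. -/
noncomputable def ofLeads (hle : Admissible p r le) : WeightPartition p r n le where
  k := weightOf m S
  l := (S.1.filter fun s => m s ≠ 0).card
  I j := Finset.univ.filter fun i => m i ≠ 0 ∧ blockIndex le m S i = j
  deg_eq := card_filter_add_card_infPart_weightOf m S
  subset_supp j i hi := mem_suppW_weightOf.mpr (.inl (Finset.mem_filter_univ _ |>.mp hi).1)
  not_inf j i hi h := (Finset.mem_filter_univ _ |>.mp hi).1 (weightOf_eq_none_iff.mp h).1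
  interval j a ha c hc b hb hab hbc := by
    obtain ⟨a_ne, ha⟩ := (Finset.mem_filter_univ _).mp ha
    obtain ⟨c_ne, hc⟩ := (Finset.mem_filter_univ _).mp hc
    rw [← suppRank_le_suppRank hle (mem_suppW_weightOf.mpr (.inl a_ne)) hb] at hab
    rw [← suppRank_le_suppRank hle hb (mem_suppW_weightOf.mpr (.inl c_ne))] at hbc
    have b_ne := kplus_ne_zero_of_suppRank_le hle (kplus_weightOf.symm ▸ a_ne) hb hab
    refine (Finset.mem_filter_univ _).mpr ⟨kplus_weightOf (m := m) ▸ b_ne, le_antisymm ?_ ?_⟩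
    · exact hc ▸ countLE_mono hbc
    · exact ha ▸ countLE_mono hab
  disj j j' hne := Finset.disjoint_filter.mpr fun i _ hi hi' =>
    hne (Fin.ext (hi.2.symm.trans hi'.2))
  cover i hi := by
    obtain i_ne | i_eq := ne_or_eq (m i) 0
    · have index_lt := Nat.lt_succ_of_le (blockIndex_le_card (le := le) m S i)
      exact .inr ⟨⟨_, index_lt⟩, (Finset.mem_filter_univ _).mpr ⟨i_ne, rfl⟩⟩
    · have i_mem := (mem_suppW_weightOf.mp hi).resolve_left (not_not_intro i_eq)
      exact .inl (weightOf_eq_none_iff.mpr ⟨i_eq, i_mem⟩)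
  nonempty j hj := by
    obtain ⟨i, hi⟩ := exists_blockIndex_eq m S hle (Fin.val_ne_zero_iff.mpr hj)
      (Nat.le_of_lt_succ j.isLt)
    exact ⟨i, (Finset.mem_filter_univ _).mpr hi⟩
  lt_succ j hj a ha b hb := by
    obtain ⟨a_ne, ha⟩ := (Finset.mem_filter_univ _).mp ha
    obtain ⟨b_ne, hb⟩ := (Finset.mem_filter_univ _).mp hb
    have index_lt : blockIndex le m S a < blockIndex le m S b := by
      rw [ha, hb]; exact Nat.lt_succ_self j
    refine ⟨?_, fun hab => index_lt.ne (congrArg _ hab)⟩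
    rw [← suppRank_le_suppRank hle (mem_suppW_weightOf.mpr (.inl a_ne))
      (mem_suppW_weightOf.mpr (.inl b_ne))]
    by_contra! h
    exact index_lt.not_ge (countLE_mono h.le)

lemma start_ofLeads (hle : Admissible p r le) {s : Fin r} (hs : s ∈ S.1.filter fun s => m s ≠ 0)
    {j : Fin (ofLeads m S hle).l} (hj : blockIndex le m S s = j.succ) :
    (ofLeads m S hle).start j = s := by
  have s_mem : s ∈ (ofLeads m S hle).I j.succ :=
    (Finset.mem_filter_univ _).mpr ⟨(Finset.mem_filter.mp hs).2, hj⟩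
  have start_mem := (ofLeads m S hle).start_mem j
  have start_index : blockIndex le m S ((ofLeads m S hle).start j) = j.succ :=
    ((Finset.mem_filter_univ _).mp start_mem).2
  have start_le := (ofLeads m S hle).suppRank_start_le s_mem
  refine suppRank_injOn hle ((ofLeads m S hle).subset_supp _ start_mem)
    ((ofLeads m S hle).subset_supp _ s_mem) (start_le.antisymm ?_)
  by_contra! h
  exact (countLE_lt hs h).ne (start_index.trans hj.symm)

lemma leads_ofLeads (hle : Admissible p r le) : (ofLeads m S hle).leads = S := by
  refine Subtype.ext (Finset.eq_of_subset_of_card_le (fun s hs => ?_) ?_).symm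
  · rw [mem_leads]
    by_cases s_eq : m s = 0
    · exact .inr (mem_infPart.mpr (weightOf_eq_none_iff.mpr ⟨s_eq, hs⟩))
    · have s_mem : s ∈ S.1.filter fun s => m s ≠ 0 := Finset.mem_filter.mpr ⟨hs, s_eq⟩
      have index_pos : 0 < blockIndex le m S s := countLE_pos s_mem
      obtain ⟨j, hj⟩ := Nat.exists_eq_add_one.mpr index_pos
      have j_lt : j + 1 ≤ (ofLeads m S hle).l := hj ▸ blockIndex_le_card m S s
      exact .inl ⟨⟨j, j_lt⟩, start_ofLeads m S hle s_mem hj⟩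
  · rw [S.2, (ofLeads m S hle).leads.2]

end Bijection

end WeightPartition

/-- Weight partitions `(k, 𝒫)` correspond to pairs `(m, S)` of an exponent vector and an
`n`-element set, through `m = k⁺` and `S = {min I₁, …, min I_l} ∪ I_{-∞}`. -/
noncomputable def weightPartitionEquiv {p r n : ℕ}
    {le : (Fin r → Option ℤ) → Fin r → Fin r → Prop} (hle : Admissible p r le) :
    WeightPartition p r n le ≃ (Fin r → ℤ) × Set.powersetCard (Fin r) n where
  toFun w := (kplus w.k, w.leads)
  invFun x := .ofLeads x.1 x.2 hle
  left_inv _ :=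
    WeightPartition.ext_of_leads hle kplus_weightOf (WeightPartition.leads_ofLeads _ _ hle)
  right_inv _ := Prod.ext kplus_weightOf (WeightPartition.leads_ofLeads _ _ hle)

section Exponents

namespace WeightPartition

variable {p r n : ℕ} {le : (Fin r → Option ℤ) → Fin r → Fin r → Prop}
  (w : WeightPartition p r n le)

/-- The exponent of the monomial whose `dlog` is the `t`-th factor of `ē(k, 𝒫)`. -/
noncomputable def exponent (t : Fin n) : Fin r → ℤ :=
  Sum.elim (fun j => kIdiv p w.k (w.I j.succ)) (fun i => Pi.single i.1 1) (w.slot.symm t)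

lemma exponent_slot (s : Fin w.l ⊕ infPart w.k) :
    w.exponent (w.slot s) =
      Sum.elim (fun j => kIdiv p w.k (w.I j.succ)) (fun i => Pi.single i.1 1) s := by
  simp [exponent]

lemma exponent_eq_zero {t : Fin n} {i : Fin r} (hi : i ∉ w.block t) : w.exponent t i = 0 := by
  obtain ⟨j | i', rfl⟩ := w.slot.surjective t <;> rw [block_slot] at hi <;> rw [exponent_slot]
  · exact if_neg hi
  · exact Pi.single_eq_of_ne (fun h => hi (Finset.mem_singleton.mpr h)) 1

lemma padicValInt_kplus_start_le (hle : Admissible p r le) {j : Fin w.l} {i : Fin r}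
    (hi : i ∈ w.I j.succ) :
    padicValInt p (kplus w.k (w.start j)) ≤ padicValInt p (kplus w.k i) := by
  have ordWeight_eq : ∀ i' ∈ w.I j.succ, ordWeight p w.k i' = padicValInt p (kplus w.k i') := by
    intro i' hi'
    obtain ⟨z, hz⟩ := Option.ne_none_iff_exists'.mp (w.not_inf _ i' hi')
    simp [ordWeight, kplus, hz]
  have ordWeight_le := ordWeight_le_of_suppRank_le hle (w.subset_supp _ (w.start_mem j))
    (w.subset_supp _ hi) (w.suppRank_start_le hi)
  rw [ordWeight_eq _ (w.start_mem j), ordWeight_eq i hi] at ordWeight_le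
  exact_mod_cast ordWeight_le

lemma ordSet_I_succ (hle : Admissible p r le) (j : Fin w.l) :
    ordSet p w.k (w.I j.succ) = padicValInt p (kplus w.k (w.start j)) :=
  IsLeast.csInf_eq ⟨⟨_, w.start_mem j, rfl⟩, Set.forall_mem_image.mpr fun _ hi =>
    w.padicValInt_kplus_start_le hle hi⟩

lemma not_dvd_exponent_lead (hp : p ≠ 1) (hle : Admissible p r le) (t : Fin n) :
    ¬(p : ℤ) ∣ w.exponent t (w.lead t) := by
  obtain ⟨j | i, rfl⟩ := w.slot.surjective t <;> rw [exponent_slot, lead_slot]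
  · rw [Sum.elim_inl, Sum.elim_inl, kIdiv, if_pos (w.start_mem j), w.ordSet_I_succ hle]
    exact not_dvd_ediv_pow_padicValInt hp (w.kplus_ne_zero_of_mem (w.start_mem j))
  · rw [Sum.elim_inr, Sum.elim_inr, Pi.single_eq_same]
    exact_mod_cast fun h => hp (Nat.dvd_one.mp h)

end WeightPartition

end Exponents

section PBasicForms

variable {p r n : ℕ} (R : Type*) [CommRing R]
  {le : (Fin r → Option ℤ) → Fin r → Fin r → Prop}

/-- The `p`-basic element `ē(k, 𝒫)`, as an element of `Ω^n`. -/
noncomputable def pBasicForm (w : WeightPartition p r n le) :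
    ⋀[AddMonoidAlgebra R (Fin r → ℤ)]^n Ω[AddMonoidAlgebra R (Fin r → ℤ)⁄R] :=
  Tpow R (kplus w.k) •
    exteriorPower.ιMulti (AddMonoidAlgebra R (Fin r → ℤ)) n fun t => dlogT R (w.exponent t)

lemma coe_pBasicForm (w : WeightPartition p r n le) :
    (pBasicForm R w : ExteriorAlgebra (AddMonoidAlgebra R (Fin r → ℤ))
      Ω[AddMonoidAlgebra R (Fin r → ℤ)⁄R]) = pBasicElt p R w := by
  rw [pBasicForm, pBasicElt, Submodule.coe_smul, exteriorPower.ιMulti_apply_coe]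
  congr 2
  funext t
  obtain ⟨j | i, rfl⟩ := w.slot.surjective t <;> rw [w.exponent_slot]
  · simp [WeightPartition.slot]
  · simp [WeightPartition.slot, -Finset.coe_orderIsoOfFin_apply]

/-- A measure of how early the elements of `S` are placed in the order on the support of
`weightOf m S`: it decreases when they are replaced by later ones. -/
noncomputable def earliness (le : (Fin r → Option ℤ) → Fin r → Fin r → Prop)
    (x : (Fin r → ℤ) × Set.powersetCard (Fin r) n) : ℕ :=
  ∑ i ∈ x.2.1, (r - suppRank le (weightOf x.1 x.2) i)

lemma earliness_kplus_ofFinEmb (w : WeightPartition p r n le) {f : Fin n ↪ Fin r}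
    (hf : ∀ t, f t ∈ w.block t) :
    earliness le (kplus w.k, Set.powersetCard.ofFinEmb n (Fin r) f) =
      ∑ t, (r - suppRank le w.k (f t)) := by
  rw [earliness, w.weightOf_kplus_ofFinEmb hf, Set.powersetCard.val_ofFinEmb, Finset.sum_map]

lemma earliness_lt (hle : Admissible p r le) (w : WeightPartition p r n le) {f : Fin n ↪ Fin r}
    (hf : ∀ t, f t ∈ w.block t) (hne : f ≠ w.lead) :
    earliness le (kplus w.k, Set.powersetCard.ofFinEmb n (Fin r) f) <
      earliness le (kplus w.k, w.leads) := by
  rw [WeightPartition.leads, earliness_kplus_ofFinEmb w hf,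
    earliness_kplus_ofFinEmb w w.lead_mem_block]
  obtain ⟨t, ht⟩ := DFunLike.ne_iff.mp hne
  have rank_lt : suppRank le w.k (w.lead t) < suppRank le w.k (f t) :=
    (w.suppRank_lead_le (hf t)).lt_of_ne fun h => ht <| suppRank_injOn hle
      (w.block_subset_suppW t (hf t)) (w.block_subset_suppW t (w.lead_mem_block t)) h.symm
  exact Finset.sum_lt_sum (fun t _ => Nat.sub_le_sub_left (w.suppRank_lead_le (hf t)) r)
    ⟨t, Finset.mem_univ t, Nat.sub_lt_sub_left (rank_lt.trans_le suppRank_le) rank_lt⟩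

lemma dlogT_exponent (w : WeightPartition p r n le) (t : Fin n) :
    dlogT R (w.exponent t) = ∑ i ∈ w.block t, (w.exponent t i : R) • dlogBasis R i := by
  simp only [dlogBasis_apply, Int.cast_smul_eq_zsmul]
  rw [dlogT_eq_sum]
  refine (Finset.sum_subset (Finset.subset_univ _) fun i _ hi => ?_).symm
  rw [w.exponent_eq_zero hi, zero_smul]

lemma pBasicForm_sub_leading_mem_span (hle : Admissible p r le) (w : WeightPartition p r n le) :
    ∃ ε : ℤˣ, pBasicForm R w -
        ((ε : ℤ) * ∏ t, (w.exponent t (w.lead t) : R)) • logFormBasis R n (kplus w.k, w.leads) ∈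
      Submodule.span R (logFormBasis R n ''
        {x | earliness le x < earliness le (kplus w.k, w.leads)}) := by
  obtain ⟨ε, hε⟩ := ιMulti_sub_leading_mem_span (dlogBasis R) w.pairwise_disjoint_block
    (fun t i => (w.exponent t i : R)) w.lead w.lead_mem_block
  refine ⟨ε, ?_⟩
  have mul_Tpow := Submodule.mem_map_of_mem (f := Algebra.lsmul R R _ (Tpow R (kplus w.k))) hε
  rw [Submodule.map_span, map_sub, map_smul] at mul_Tpow
  simp only [← dlogT_exponent, Algebra.lsmul_coe, ← Set.image_comp] at mul_Tpow
  rw [logFormBasis_apply]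
  refine Submodule.span_mono ?_ mul_Tpow
  rintro _ ⟨f, ⟨hf, hne⟩, rfl⟩
  exact ⟨_, earliness_lt hle w hf hne, logFormBasis_apply R _ _⟩

lemma pBasicForm_triangular (hp : p ≠ 1) (hR : ∀ q : ℕ, q.Prime → q ≠ p → IsUnit (q : R))
    (hle : Admissible p r le) (x : (Fin r → ℤ) × Set.powersetCard (Fin r) n) :
    ∃ u : Rˣ, pBasicForm R ((weightPartitionEquiv hle).symm x) - (u : R) • logFormBasis R n x ∈
      Submodule.span R (logFormBasis R n '' {y | earliness le y < earliness le x}) := by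
  obtain ⟨w, rfl⟩ := (weightPartitionEquiv hle).surjective x
  rw [Equiv.symm_apply_apply]
  obtain ⟨ε, hε⟩ := pBasicForm_sub_leading_mem_span R hle w
  have coeff_isUnit : IsUnit ((ε : ℤ) * ∏ t, (w.exponent t (w.lead t) : R)) :=
    (ε.isUnit.map (Int.castRingHom R)).mul <| IsUnit.prod_univ_iff.mpr fun t =>
      isUnit_intCast_of_not_dvd hR (w.not_dvd_exponent_lead hp hle t)
  exact ⟨coeff_isUnit.unit, hε⟩

/-- The basis of `Ω^n` over `R` given by the `p`-basic elements. -/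
noncomputable def pBasicBasis (hp : p ≠ 1) (hR : ∀ q : ℕ, q.Prime → q ≠ p → IsUnit (q : R))
    (hle : Admissible p r le) :
    Module.Basis (WeightPartition p r n le) R
      (⋀[AddMonoidAlgebra R (Fin r → ℤ)]^n Ω[AddMonoidAlgebra R (Fin r → ℤ)⁄R]) :=
  (Module.Basis.mk
    (linearIndependent_of_triangular _ _ (pBasicForm_triangular R hp hR hle))
    (span_eq_top_of_triangular _ _ (pBasicForm_triangular R hp hR hle)).ge).reindex
      (weightPartitionEquiv hle).symm

lemma pBasicBasis_apply (hp : p ≠ 1) (hR : ∀ q : ℕ, q.Prime → q ≠ p → IsUnit (q : R))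
    (hle : Admissible p r le) (w : WeightPartition p r n le) :
    pBasicBasis R hp hR hle w = pBasicForm R w := by
  simp [pBasicBasis]

end PBasicForms

theorem pBasic_basis_general
    (p r n : ℕ) (hp : 1 < p) (R : Type*) [CommRing R]
    (hR : ∀ q : ℕ, q.Prime → q ≠ p → IsUnit (q : R))
    (le : (Fin r → Option ℤ) → Fin r → Fin r → Prop)
    (hle : Admissible p r le) :
    (∀ w : WeightPartition p r n le,
        pBasicElt p R w ∈
          ⋀[AddMonoidAlgebra R (Fin r → ℤ)]^n
            (Ω[AddMonoidAlgebra R (Fin r → ℤ)⁄R])) ∧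
    ∀ ω ∈ ⋀[AddMonoidAlgebra R (Fin r → ℤ)]^n
        (Ω[AddMonoidAlgebra R (Fin r → ℤ)⁄R]),
      ∃! c : WeightPartition p r n le →₀ R,
        ω = c.sum fun w a =>
          algebraMap R (AddMonoidAlgebra R (Fin r → ℤ)) a • pBasicElt p R w := by
  refine ⟨fun w => coe_pBasicForm R w ▸ (pBasicForm R w).2, fun ω hω => ?_⟩
  have expansion := existsUnique_finsuppSum (pBasicBasis R hp.ne' hR hle) ⟨ω, hω⟩
  simpa only [Subtype.ext_iff, Finsupp.sum, pBasicBasis_apply, Submodule.coe_sum,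
    Submodule.coe_smul_of_tower, coe_pBasicForm, algebraMap_smul] using expansion

/-- Let `p` be a prime, `R` a `ℤ_(p)`-algebra, `r ≥ 0`, and
`A = R[T₁^{±1}, …, T_r^{±1}]` the Laurent polynomial ring.  Fix an admissible
choice of total orders on the supports of weights.  Then for each `n ≥ 0` the
`p`-basic elements `ē(k, 𝒫)`, where `(k, 𝒫)` runs over all weights `k` and all
partitions `𝒫 = (I_{-∞}, I₀, I₁, …, I_l)` of `k` with `l + |I_{-∞}| = n`, form
a basis of `Ω^n_{A/R} = ⋀[A]^n Ω¹_{A/R}` as an `R`-module:  each of them lies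
in `⋀[A]^n Ω¹_{A/R}`, and every element of `⋀[A]^n Ω¹_{A/R}` is uniquely a
finite `R`-linear combination of them. -/
theorem pBasic_basis
    (p r n : ℕ) (hp : p.Prime) (R : Type*) [CommRing R]
    (hR : ∀ q : ℕ, q.Prime → q ≠ p → IsUnit (q : R))
    (le : (Fin r → Option ℤ) → Fin r → Fin r → Prop)
    (hle : Admissible p r le) :
    (∀ w : WeightPartition p r n le,
        pBasicElt p R w ∈
          ⋀[AddMonoidAlgebra R (Fin r → ℤ)]^n
            (Ω[AddMonoidAlgebra R (Fin r → ℤ)⁄R])) ∧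
    ∀ ω ∈ ⋀[AddMonoidAlgebra R (Fin r → ℤ)]^n
        (Ω[AddMonoidAlgebra R (Fin r → ℤ)⁄R]),
      ∃! c : WeightPartition p r n le →₀ R,
        ω = c.sum fun w a =>
          algebraMap R (AddMonoidAlgebra R (Fin r → ℤ)) a • pBasicElt p R w :=
  pBasic_basis_general p r n hp.one_lt R hR le hle
end

section
/- Let p be a prime and f: Q → P a p-quasi-saturated homomorphism of integral monoids such that P is p-saturated. Then for every x ∈ P whose image in P^gp/Q^gp is divisible by p (i.e., lies in p·(P^gp/Q^gp)), there exist r ∈ P and q ∈ Q with x = p·r + f(q). -/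
/-!
Elements of `P^gp` and `Q^gp` are differences of elements of `P` and `Q`, so quasi-saturation
applies to any decomposition `x = n • g + φ q`. It supplies a correction `y ∈ Q^gp` moving `g` into
`P` and `q` into `Q` at once, and this correction cancels: `x = n • (g + φ y) + φ (q - n • y)`.
-/

theorem mem_addSubgroupClosure_iff_exists_sub_eq {G : Type*} [AddCommGroup G]
    {M : AddSubmonoid G} {g : G} :
    g ∈ AddSubgroup.closure (M : Set G) ↔ ∃ a ∈ M, ∃ b ∈ M, a - b = g := by
  rw [← AddSubgroup.mem_toAddSubmonoid, AddSubgroup.closure_toAddSubmonoid,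
    AddSubmonoid.closure_union, AddSubmonoid.closure_neg, AddSubmonoid.closure_eq,
    AddSubmonoid.mem_sup]
  refine exists_congr fun a => and_congr_right fun _ => ?_
  rw [neg_surjective.exists]
  simp only [AddSubmonoid.mem_neg, neg_neg, ← sub_eq_add_neg]

section QuasiSaturated

variable {GQ GP : Type*} [AddCommGroup GQ] [AddCommGroup GP]
  {n : ℕ} {Q : AddSubmonoid GQ} {P : AddSubmonoid GP} {φ : GQ →+ GP}

/-- The `n`-quasi-saturation condition on a homomorphism `f : Q → P` of integral monoids. The groups
`GQ` and `GP` play the role of `Q^gp` and `P^gp`, and `φ` that of `f^gp`. -/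
def IsQuasiSaturated (n : ℕ) (Q : AddSubmonoid GQ) (P : AddSubmonoid GP) (φ : GQ →+ GP) : Prop :=
  ∀ r₁ ∈ P, ∀ r₂ ∈ P, ∀ q₁ ∈ Q, ∀ q₂ ∈ Q, n • (r₁ - r₂) + φ (q₁ - q₂) ∈ P →
    ∃ y : GQ, (r₁ - r₂) + φ y ∈ P ∧ (q₁ - q₂) - n • y ∈ Q

theorem IsQuasiSaturated.exists_add_map_mem_and_sub_nsmul_mem (h : IsQuasiSaturated n Q P φ)
    {g : GP} {q : GQ} (hg : g ∈ AddSubgroup.closure (P : Set GP))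
    (hq : q ∈ AddSubgroup.closure (Q : Set GQ)) (hgq : n • g + φ q ∈ P) :
    ∃ y : GQ, g + φ y ∈ P ∧ q - n • y ∈ Q := by
  obtain ⟨r₁, hr₁, r₂, hr₂, rfl⟩ := mem_addSubgroupClosure_iff_exists_sub_eq.mp hg
  obtain ⟨q₁, hq₁, q₂, hq₂, rfl⟩ := mem_addSubgroupClosure_iff_exists_sub_eq.mp hq
  exact h r₁ hr₁ r₂ hr₂ q₁ hq₁ q₂ hq₂ hgq

theorem exists_p_smul_add_of_quasiSaturated_general
    (hQGen : AddSubgroup.closure (Q : Set GQ) = ⊤) (hPGen : AddSubgroup.closure (P : Set GP) = ⊤)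
    (h : IsQuasiSaturated n Q P φ) {x : GP} (hx : x ∈ P)
    (hdiv : ∃ (g : GP) (q : GQ), x = n • g + φ q) :
    ∃ r ∈ P, ∃ q ∈ Q, x = n • r + φ q := by
  obtain ⟨g, q, rfl⟩ := hdiv
  obtain ⟨y, hr, hq⟩ := h.exists_add_map_mem_and_sub_nsmul_mem
    (hPGen ▸ AddSubgroup.mem_top g) (hQGen ▸ AddSubgroup.mem_top q) hx
  refine ⟨g + φ y, hr, q - n • y, hq, ?_⟩
  rw [map_sub, map_nsmul, smul_add, add_add_sub_cancel]

end QuasiSaturated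

/-- Let `p` be a prime and `f : Q → P` a `p`-quasi-saturated
homomorphism of integral monoids with `P` `p`-saturated.  Monoids are modelled as
additive submonoids `Q ⊆ GQ = Q^gp`, `P ⊆ GP = P^gp` of the abelian groups they
generate, and `f` is the restriction of a group homomorphism `φ : GQ →+ GP`
(`φ = f^gp`).  Then for every `x ∈ P` whose image in `P^gp/Q^gp` is divisible by
`p` (i.e. `x = p • g + φ q` for some `g ∈ P^gp`, `q ∈ Q^gp`), there exist `r ∈ P`
and `q ∈ Q` with `x = p • r + φ q`. -/
theorem exists_p_smul_add_of_quasiSaturated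
    (p : ℕ) (hp : p.Prime)
    {GQ GP : Type*} [AddCommGroup GQ] [AddCommGroup GP]
    (Q : AddSubmonoid GQ) (P : AddSubmonoid GP)
    (φ : GQ →+ GP) (hmap : ∀ x ∈ Q, φ x ∈ P)
    (hQGen : AddSubgroup.closure (Q : Set GQ) = ⊤)
    (hPGen : AddSubgroup.closure (P : Set GP) = ⊤)
    (hpqs : ∀ r₁ ∈ P, ∀ r₂ ∈ P, ∀ q₁ ∈ Q, ∀ q₂ ∈ Q,
        p • (r₁ - r₂) + φ (q₁ - q₂) ∈ P →
        ∃ x : GQ, (r₁ - r₂) + φ x ∈ P ∧ (q₁ - q₂) - p • x ∈ Q)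
    (hPsat : ∀ g : GP, p • g ∈ P → g ∈ P) :
    ∀ x ∈ P, (∃ (g : GP) (q : GQ), x = p • g + φ q) →
      ∃ r ∈ P, ∃ q ∈ Q, x = p • r + φ q :=
  fun _ hx hdiv => exists_p_smul_add_of_quasiSaturated_general hQGen hPGen hpqs hx hdiv
end

section
/- Let p be a prime and f: Q → P a homomorphism of integral monoids such that P is p-saturated. Let P' be the image of P in G := P^gp/Q^gp. Then P' is p-saturated: every y ∈ G with p·y ∈ P' lies in P' (note that P' generates G, so G = (P')^gp). -/
/-!
Inside `P^gp`, the preimage of `P'` is the partial localization `P + Q^gp`. If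
`n • g = x + (a - b)` with `x ∈ P` and `a`, `b` in the image of `Q`, then `n • (g + b)` lies in
`P`, hence so does `g + b`, and `g = (g + b) - b` lies in `P + Q^gp`.
-/

/-- `n`-saturation of a submonoid `P` of a monoid `G`. For `n = p` prime and `G = P^gp` this is the
notion of a `p`-saturated integral monoid. Unlike in `AddSubmonoid.NSMulSaturated`, the multiplier
is fixed. -/
def IsNSMulSaturated {G : Type*} [AddMonoid G] (n : ℕ) (P : AddSubmonoid G) : Prop :=
  ∀ g : G, n • g ∈ P → g ∈ P

theorem mem_addSubgroupClosure_addSubmonoid_iff {G : Type*} [AddCommGroup G] {Q : AddSubmonoid G}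
    {x : G} : x ∈ AddSubgroup.closure (Q : Set G) ↔ ∃ a ∈ Q, ∃ b ∈ Q, a - b = x := by
  rw [← AddSubgroup.mem_toAddSubmonoid, AddSubgroup.closure_toAddSubmonoid,
    AddSubmonoid.closure_union, AddSubmonoid.closure_neg, AddSubmonoid.closure_eq,
    AddSubmonoid.mem_sup]
  refine exists_congr fun a ↦ and_congr_right fun _ ↦ (Equiv.neg G).exists_congr fun c ↦ ?_
  simp [AddSubmonoid.mem_neg]

theorem addSubmonoid_comap_map_eq_sup_ker {G K : Type*} [AddGroup G] [AddZeroClass K]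
    (f : G →+ K) (P : AddSubmonoid G) :
    (P.map f).comap f = P ⊔ f.ker.toAddSubmonoid := by
  apply le_antisymm
  · rintro g ⟨x, hx, hxg⟩
    have hker : -x + g ∈ f.ker := (f.eq_iff).mp hxg.symm
    simpa using AddSubmonoid.add_mem_sup hx hker
  · refine sup_le P.le_comap_map fun z hz ↦ ?_
    exact ⟨0, P.zero_mem, (map_zero f).trans (AddMonoidHom.mem_ker.mp hz).symm⟩

namespace IsNSMulSaturated

variable {n : ℕ}

theorem of_comap {G K : Type*} [AddMonoid G] [AddMonoid K] {f : G →+ K}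
    (hf : Function.Surjective f) {S : AddSubmonoid K} (hS : IsNSMulSaturated n (S.comap f)) :
    IsNSMulSaturated n S := by
  intro y hy
  obtain ⟨g, rfl⟩ := hf y
  exact hS g (by rwa [AddSubmonoid.mem_comap, map_nsmul])

theorem add_mem_of_nsmul_eq {G : Type*} [AddCommGroup G] {P : AddSubmonoid G}
    (hP : IsNSMulSaturated n P) {g x a b : G} (hx : x ∈ P) (ha : a ∈ P) (hb : b ∈ P)
    (h : n • g = x + (a - b)) : g + b ∈ P := by
  apply hP
  cases n with
  | zero => simp
  | succ m =>
    have hsum : (m + 1) • (g + b) = x + a + m • b := by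
      rw [nsmul_add, h, succ_nsmul b]
      abel
    rw [hsum]
    exact P.add_mem (P.add_mem hx ha) (P.nsmul_mem hb m)

theorem sup_addSubgroupClosure {G : Type*} [AddCommGroup G] {P Q : AddSubmonoid G}
    (hP : IsNSMulSaturated n P) (hQP : Q ≤ P) :
    IsNSMulSaturated n (P ⊔ (AddSubgroup.closure (Q : Set G)).toAddSubmonoid) := by
  intro g hg
  obtain ⟨x, hx, z, hz, hxz⟩ := AddSubmonoid.mem_sup.mp hg
  obtain ⟨a, ha, b, hb, rfl⟩ := mem_addSubgroupClosure_addSubmonoid_iff.mp hz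
  have hgb : g + b ∈ P := hP.add_mem_of_nsmul_eq hx (hQP ha) (hQP hb) hxz.symm
  have hnegb : -b ∈ AddSubgroup.closure (Q : Set G) := neg_mem (AddSubgroup.subset_closure hb)
  simpa using AddSubmonoid.add_mem_sup hgb hnegb

end IsNSMulSaturated

theorem image_pSaturated_general (n : ℕ) {GQ GP : Type*} [AddGroup GQ] [AddCommGroup GP]
    {Q : AddSubmonoid GQ} {P : AddSubmonoid GP} {φ : GQ →+ GP} (hmap : Q ≤ P.comap φ)
    (hQGen : AddSubgroup.closure (Q : Set GQ) = ⊤) (hPsat : IsNSMulSaturated n P) :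
    IsNSMulSaturated n (P.map (QuotientAddGroup.mk' φ.range)) := by
  have hrange : φ.range = AddSubgroup.closure (Q.map φ : Set GP) := by
    rw [AddSubmonoid.coe_map, ← AddMonoidHom.map_closure, hQGen, AddMonoidHom.range_eq_map]
  apply IsNSMulSaturated.of_comap (QuotientAddGroup.mk'_surjective φ.range)
  rw [addSubmonoid_comap_map_eq_sup_ker, QuotientAddGroup.ker_mk', hrange]
  exact hPsat.sup_addSubgroupClosure (AddSubmonoid.map_le_iff_le_comap.mpr hmap)

/-- Let `p` be a prime and `f : Q → P` a homomorphism of integral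
monoids with `P` `p`-saturated.  (Monoids are modelled as additive submonoids of the
abelian groups `GQ = Q^gp`, `GP = P^gp` they generate, `f` being the restriction of
`φ = f^gp : GQ →+ GP`.)  Let `P'` be the image of `P` in `G = P^gp/Q^gp`.  Then `P'`
is `p`-saturated: every `y ∈ G` with `p • y ∈ P'` lies in `P'`.  (Note that `P'`
generates `G`, so `G = (P')^gp`.) -/
theorem image_pSaturated
    (p : ℕ) (hp : p.Prime)
    {GQ GP : Type*} [AddCommGroup GQ] [AddCommGroup GP]
    (Q : AddSubmonoid GQ) (P : AddSubmonoid GP)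
    (φ : GQ →+ GP) (hmap : ∀ x ∈ Q, φ x ∈ P)
    (hQGen : AddSubgroup.closure (Q : Set GQ) = ⊤)
    (hPGen : AddSubgroup.closure (P : Set GP) = ⊤)
    (hPsat : ∀ g : GP, p • g ∈ P → g ∈ P) :
    ∀ y : GP ⧸ AddMonoidHom.range φ,
      p • y ∈ (QuotientAddGroup.mk' (AddMonoidHom.range φ)) '' (P : Set GP) →
      y ∈ (QuotientAddGroup.mk' (AddMonoidHom.range φ)) '' (P : Set GP) :=
  image_pSaturated_general p hmap hQGen hPsat
end

section
/- Let p be a prime and f: Q → P an injective homomorphism of integral monoids such that Q is saturated and P^gp/Q^gp has no p-torsion. Then for every n ∈ ℕ and every q ∈ Q, if f(q) = p^n·g for some g ∈ P^gp, then q = p^n·q' for some q' ∈ Q; that is, inside P^gp, the image of Q meets p^n·P^gp exactly in the image of p^n·Q. -/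
/-!
If `φ q = p ^ n • g`, then `g = φ q'` for some `q' ∈ Q^gp`, because `P^gp / Q^gp` has no
`p`-torsion. Since `Q^gp = Q - Q`, injectivity on `Q` extends to `Q^gp`, so `q = p ^ n • q'`, and
saturation puts `q'` in `Q`.
-/

theorem exists_mem_mem_sub_eq_of_mem_closure {G : Type*} [AddCommGroup G] {S : AddSubmonoid G}
    {x : G} (hx : x ∈ AddSubgroup.closure (S : Set G)) : ∃ a ∈ S, ∃ b ∈ S, a - b = x := by
  rw [← AddSubgroup.mem_toAddSubmonoid, AddSubgroup.closure_toAddSubmonoid,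
    AddSubmonoid.closure_union, ← AddSubmonoid.coe_neg, AddSubmonoid.closure_eq,
    AddSubmonoid.closure_eq, AddSubmonoid.mem_sup] at hx
  obtain ⟨a, ha, b, hb, rfl⟩ := hx
  exact ⟨a, ha, -b, hb, sub_neg_eq_add a b⟩

theorem injective_of_injOn_of_closure_eq_top {G M : Type*} [AddCommGroup G] [AddMonoid M]
    {S : AddSubmonoid G} {φ : G →+ M} (hφ : Set.InjOn φ S)
    (hS : AddSubgroup.closure (S : Set G) = ⊤) : Function.Injective φ := by
  refine (injective_iff_map_eq_zero φ).mpr fun x hx => ?_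
  obtain ⟨a, ha, b, hb, rfl⟩ :=
    exists_mem_mem_sub_eq_of_mem_closure (hS ▸ AddSubgroup.mem_top x)
  have map_eq : φ a = φ b := by
    rw [← sub_add_cancel a b, map_add, hx, zero_add]
  exact sub_eq_zero.mpr (hφ ha hb map_eq)

theorem mem_of_pow_smul_mem {M α : Type*} [Monoid M] [MulAction M α] {m : M} {s : Set α}
    (hs : ∀ x, m • x ∈ s → x ∈ s) (n : ℕ) {x : α} (hx : m ^ n • x ∈ s) : x ∈ s := by
  induction n with
  | zero => rwa [pow_zero, one_smul] at hx
  | succ n ih =>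
    rw [pow_succ', mul_smul] at hx
    exact ih (hs _ hx)

theorem exists_map_eq_nsmul_iff {M N : Type*} [AddMonoid M] [AddMonoid N] {φ : M →+ N}
    (hφ : Function.Injective φ) {s : Set M} {m : ℕ} (hs : ∀ x, m • x ∈ s → x ∈ s)
    (hrange : ∀ y, m • y ∈ Set.range φ → y ∈ Set.range φ) {x : M} (hx : x ∈ s) :
    (∃ y, φ x = m • y) ↔ ∃ x' ∈ s, x = m • x' := by
  constructor
  · rintro ⟨y, hy⟩
    obtain ⟨x', rfl⟩ := hrange y ⟨x, hy⟩
    obtain rfl : x = m • x' := hφ (hy.trans (map_nsmul φ m x').symm)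
    exact ⟨x', hs x' hx, rfl⟩
  · rintro ⟨x', -, rfl⟩
    exact ⟨φ x', map_nsmul φ m x'⟩

theorem mem_pPow_smul_iff_general (p : ℕ) {GQ GP : Type*} [AddCommGroup GQ] [AddMonoid GP]
    (Q : AddSubmonoid GQ) (φ : GQ →+ GP) (hinj : Set.InjOn φ Q)
    (hQGen : AddSubgroup.closure (Q : Set GQ) = ⊤)
    (hQsat : ∀ g : GQ, p • g ∈ Q → g ∈ Q)
    (hNoPTor : ∀ g : GP, p • g ∈ Set.range φ → g ∈ Set.range φ)
    (n : ℕ) (q : GQ) (hq : q ∈ Q) :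
    (∃ g : GP, φ q = p ^ n • g) ↔ ∃ q' ∈ Q, q = p ^ n • q' :=
  exists_map_eq_nsmul_iff (injective_of_injOn_of_closure_eq_top hinj hQGen)
    (fun _ => mem_of_pow_smul_mem hQsat n) (fun _ => mem_of_pow_smul_mem hNoPTor n) hq

/-- Let `p` be a prime and `f : Q → P` an injective homomorphism
of integral monoids such that `Q` is saturated and `P^gp/Q^gp` has no `p`-torsion.
(Monoids are modelled as additive submonoids of the abelian groups `GQ = Q^gp`,
`GP = P^gp` they generate, `f` being the restriction of `φ = f^gp : GQ →+ GP`.)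
Then for every `n ∈ ℕ` and `q ∈ Q`:  `φ q = p^n • g` for some `g ∈ P^gp` if and
only if `q = p^n • q'` for some `q' ∈ Q`; that is, inside `P^gp` the image of `Q`
meets `p^n • P^gp` exactly in the image of `p^n • Q`. -/
theorem mem_pPow_smul_iff
    (p : ℕ) (hp : p.Prime)
    {GQ GP : Type*} [AddCommGroup GQ] [AddCommGroup GP]
    (Q : AddSubmonoid GQ) (P : AddSubmonoid GP)
    (φ : GQ →+ GP) (hmap : ∀ x ∈ Q, φ x ∈ P)
    (hinj : ∀ a ∈ Q, ∀ b ∈ Q, φ a = φ b → a = b)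
    (hQGen : AddSubgroup.closure (Q : Set GQ) = ⊤)
    (hPGen : AddSubgroup.closure (P : Set GP) = ⊤)
    (hQsat : ∀ g : GQ, ∀ n : ℕ, 0 < n → n • g ∈ Q → g ∈ Q)
    (hNoPTor : ∀ g : GP, p • g ∈ AddMonoidHom.range φ → g ∈ AddMonoidHom.range φ) :
    ∀ n : ℕ, ∀ q ∈ Q,
      ((∃ g : GP, φ q = p ^ n • g) ↔ ∃ q' ∈ Q, q = p ^ n • q') :=
  mem_pPow_smul_iff_general p Q φ (fun a ha b hb => hinj a ha b hb) hQGen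
    (fun g => hQsat g p hp.pos) hNoPTor
end
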